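/- Let 1 ≤ p ≤ ∞ and α satisfy α > −1/p (α ≥ 0 for p = ∞). For any algebraic polynomial P_n of degree at most n−1, ‖(D_{x,2,2}P_n)(x)(1−x²)^α‖_p ≤ C n² ‖P_n(x)(1−x²)^α‖_p, where D_{x,2,2} = (1−x²) d²/dx² − 6x d/dx and C does not depend on n or P_n. -/

import Mathlib

open MeasureTheory Real Set
open scoped ENNReal

noncomputable section

/-- `R = x y − z √(1−x²) √(1−y²)`. -/
def Rker (x y z : ℝ) : ℝ := x * y - z * Real.sqrt (1 - x ^ 2) * Real.sqrt (1 - y ^ 2)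

/-- The kernel `B_y(x, z, R)` of the asymmetric generalised translation operator. -/
def Bker (y x z : ℝ) : ℝ :=
  2 * (Real.sqrt (1 - x ^ 2) * y + z * x * Real.sqrt (1 - y ^ 2) +
      Real.sqrt (1 - x ^ 2) * (1 - y) * (1 - z ^ 2)) ^ 2 - (1 - Rker x y z ^ 2)

/-- The asymmetric generalised translation operator `T_y(f, x)`. -/
def Tgen (y : ℝ) (f : ℝ → ℝ) (x : ℝ) : ℝ :=
  (4 / (Real.pi * (1 - x ^ 2) * (1 + y) ^ 2)) *
    ∫ z in (-1 : ℝ)..1, Bker y x z * f (Rker x y z) / Real.sqrt (1 - z ^ 2)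

/-- The Jacobi differential operator `D_{x,2,2} = (1−x²) d²/dx² − 6x d/dx`. -/
def Dop (f : ℝ → ℝ) (x : ℝ) : ℝ := (1 - x ^ 2) * deriv (deriv f) x - 6 * x * deriv f x

/-- Weighted `L^p` norm `‖f(x) (1−x²)^α‖_p` on `[−1,1]`. -/
def wnorm (p : ℝ≥0∞) (α : ℝ) (f : ℝ → ℝ) : ℝ≥0∞ :=
  eLpNorm (fun x => f x * (1 - x ^ 2) ^ α) p (volume.restrict (Set.Icc (-1 : ℝ) 1))

/-- `h` is absolutely continuous on every closed subinterval of `(−1,1)`: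
it is the integral of its derivative there. -/
def LocAC (h : ℝ → ℝ) : Prop :=
  ∀ a b : ℝ, -1 < a → a ≤ b → b < 1 →
    IntervalIntegrable (deriv h) MeasureTheory.volume a b ∧
      ∀ x ∈ Set.Icc a b, h x = h a + ∫ t in a..x, deriv h t

/-- The system `P` consists of the Jacobi polynomials for the weight `(1−x)^a (1+x)^b`,
normalised by `P n 1 = 1`. -/
def IsJacobiSystem (a b : ℝ) (P : ℕ → ℝ → ℝ) : Prop :=
  (∀ n : ℕ, ∃ q : Polynomial ℝ, q.natDegree = n ∧ ∀ x, P n x = q.eval x) ∧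
  (∀ m n : ℕ, m ≠ n →
    ∫ x in (-1 : ℝ)..1, P m x * P n x * (1 - x) ^ a * (1 + x) ^ b = 0) ∧
  (∀ n : ℕ, P n 1 = 1)

/-- Conditions on `p` and `α` in the main theorems. -/
def ParamOK (p : ℝ≥0∞) (α : ℝ) : Prop :=
  1 ≤ p ∧
  (p = 1 → 1 / 2 < α ∧ α ≤ 1) ∧
  (1 < p → p ≠ ⊤ → 1 - 1 / (2 * p.toReal) < α ∧ α < 3 / 2 - 1 / (2 * p.toReal)) ∧
  (p = ⊤ → 1 ≤ α ∧ α < 3 / 2)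

/-- Best approximation of `f` by algebraic polynomials of degree at most `n − 1`. -/
def bestE (p : ℝ≥0∞) (α : ℝ) (n : ℕ) (f : ℝ → ℝ) : ℝ≥0∞ :=
  ⨅ (q : Polynomial ℝ) (_ : q.natDegree ≤ n - 1), wnorm p α (fun x => f x - q.eval x)

/-- The generalised modulus of smoothness `ω(f, δ)`. -/
def wmod (p : ℝ≥0∞) (α : ℝ) (f : ℝ → ℝ) (δ : ℝ) : ℝ≥0∞ :=
  ⨆ t ∈ Set.Icc (-δ) δ, wnorm p α (fun x => Tgen (Real.cos t) f x - f x)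

/-- The Peetre K-functional between `L^p_α` and the weighted Sobolev-type space. -/
def Kfun (p : ℝ≥0∞) (α : ℝ) (f : ℝ → ℝ) (δ : ℝ) : ℝ≥0∞ :=
  ⨅ (g : ℝ → ℝ) (_ : LocAC (deriv g) ∧ wnorm p α g < ⊤ ∧ wnorm p α (Dop g) < ⊤),
    wnorm p α (fun x => f x - g x) + ENNReal.ofReal (δ ^ 2) * wnorm p α (Dop g)

/-!
Substitute `x = cos θ`: with `β = 2α + 1/p`, the weighted norm on `[-1, 1]` becomes the `L^p` norm
on `(0, π)` against `(sin θ)^β`, and the hypothesis on `α` says that `β p > -1`.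

Write `P (cos u) = e^{-inu} U(e^{iu})` with `U` a polynomial of degree at most `2n`. Multiplying `U`
by a power of a geometric mean peaked at `e^{iθ}` and bounding the product by its average over the
unit circle shows that `|P (cos u)|` is, for all complex `u` within `1/(4n)` of `θ`, at most a
constant times the average of `|P (cos s)|` against the kernel `n / (1 + n|θ - s|)^k`. Cauchy's
estimates on discs of radius `1/(8n)` convert this into a pointwise bound `n²` times the same
average for the differential operator applied to `P`, and into a modulus of continuity for
`P (cos θ)` at the scale `1/n`.

By Schur's test the averaging is bounded on `L^p` for the weight `(sin θ + 1/n)^β`, which varies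
slowly at the scale `1/n`; integrability of `(sin θ)^{βp}` near the endpoints even allows the
output to be measured against `(sin θ)^β` when `β < 0`. The regularization is removed from the
weight on the input side by shifting `θ` towards `π/2` by `(δ/n)(π/2 - θ)`, which makes `sin θ` at
least `δ (sin θ + 1/n)`; the error committed in `P (cos θ)` is `δ` times the average once more, and
is absorbed for small `δ`.
-/

namespace WeightedBernstein

open Polynomial

/-! ### Local averages of polynomials in `cos θ` -/

lemma norm_coeff_le_circleAverage (R : ℂ[X]) (j : ℕ) :
    ‖R.coeff j‖ ≤ circleAverage (fun z => ‖R.eval z‖) 0 1 := by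
  have : Fact (0 < 2 * π) := ⟨two_pi_pos⟩
  rw [← R.fourierCoeff_toAddCircle_natCast j, fourierCoeff_eq_intervalIntegral _ _ 0, zero_add,
    norm_smul, circleAverage_def, smul_eq_mul, norm_of_nonneg (by positivity), one_div]
  refine mul_le_mul_of_nonneg_left
    ((intervalIntegral.norm_integral_le_integral_norm two_pi_pos.le).trans_eq
      (intervalIntegral.integral_congr fun s _ => ?_)) (by positivity)
  have h_fourier : ‖fourier (T := 2 * π) (-(j : ℤ)) (s : AddCircle (2 * π))‖ = 1 :=
    Circle.norm_coe _
  simp only [norm_smul, h_fourier, one_mul]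
  simp [toAddCircle, circleMap, aeval_continuousMap_apply, AddCircle.toCircle]

lemma norm_eval_le_circleAverage {R : ℂ[X]} {D : ℕ} (hR : R.natDegree ≤ D) {z : ℂ} {B : ℝ}
    (hB : 1 ≤ B) (hz : ‖z‖ ≤ B) :
    ‖R.eval z‖ ≤ (D + 1) * B ^ D * circleAverage (fun w => ‖R.eval w‖) 0 1 := by
  have h_term : ∀ j ∈ Finset.range (D + 1),
      ‖R.coeff j * z ^ j‖ ≤ circleAverage (fun w => ‖R.eval w‖) 0 1 * B ^ D := fun j hj => by
    rw [norm_mul, norm_pow]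
    have h_pow : ‖z‖ ^ j ≤ B ^ D := (pow_le_pow_left₀ (norm_nonneg z) hz j).trans
      (pow_le_pow_right₀ hB (Finset.mem_range_succ_iff.1 hj))
    exact mul_le_mul (norm_coeff_le_circleAverage R j) h_pow (by positivity)
      ((norm_nonneg _).trans (norm_coeff_le_circleAverage R j))
  rw [eval_eq_sum_range' (Nat.lt_succ_of_le hR)]
  refine (norm_sum_le_of_le _ h_term).trans_eq ?_
  rw [Finset.sum_const, Finset.card_range, nsmul_eq_mul]
  push_cast
  ring

/-- The averaged geometric sum `(1 + X + ⋯ + X ^ (n - 1)) / n`, a polynomial peaked at `1` on the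
unit circle; its powers localise polynomials of degree `n` at the scale `1 / n`. -/
def geomMean (n : ℕ) : ℂ[X] := C (n : ℂ)⁻¹ * ∑ j ∈ Finset.range n, X ^ j

lemma natDegree_geomMean_le (n : ℕ) : (geomMean n).natDegree ≤ n :=
  (natDegree_C_mul_le _ _).trans <| natDegree_sum_le_of_forall_le _ _ fun j hj => by
    simpa using (Finset.mem_range.1 hj).le

lemma eval_geomMean (n : ℕ) (z : ℂ) :
    (geomMean n).eval z = (n : ℂ)⁻¹ * ∑ j ∈ Finset.range n, z ^ j := by
  simp [geomMean, eval_finsetSum]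

lemma norm_inv_mul_sum_range_le {n : ℕ} (hn : 1 ≤ n) {f : ℕ → ℂ} {B : ℝ}
    (hf : ∀ j < n, ‖f j‖ ≤ B) : ‖(n : ℂ)⁻¹ * ∑ j ∈ Finset.range n, f j‖ ≤ B := by
  have hn_pos : (0 : ℝ) < n := by exact_mod_cast hn
  rw [norm_mul, norm_inv, Complex.norm_natCast, inv_mul_le_iff₀ hn_pos]
  simpa using norm_sum_le_of_le (Finset.range n) fun j hj => hf j (Finset.mem_range.1 hj)

lemma norm_eval_geomMean_mul_le {n : ℕ} (hn : 1 ≤ n) {z : ℂ} (hz : ‖z‖ = 1) :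
    ‖(geomMean n).eval z‖ * (1 + n * ‖z - 1‖) ≤ 3 := by
  have hn_ne : (n : ℂ) ≠ 0 := by exact_mod_cast (by lia : n ≠ 0)
  have h_le_one : ‖(geomMean n).eval z‖ ≤ 1 := by
    rw [eval_geomMean]
    exact norm_inv_mul_sum_range_le hn fun j _ => by simp [hz]
  have h_telescope : (geomMean n).eval z * (n * (z - 1)) = z ^ n - 1 := by
    rw [eval_geomMean, ← geom_sum_mul]
    field_simp
  have h_le_two : ‖(geomMean n).eval z‖ * (n * ‖z - 1‖) ≤ 2 :=
    calc ‖(geomMean n).eval z‖ * (n * ‖z - 1‖) = ‖z ^ n - 1‖ := by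
          rw [← h_telescope, norm_mul, norm_mul, Complex.norm_natCast]
      _ ≤ ‖z ^ n‖ + ‖(1 : ℂ)‖ := norm_sub_le _ _
      _ = 2 := by norm_num [hz]
  linarith

lemma half_le_norm_eval_geomMean {n : ℕ} (hn : 1 ≤ n) {v : ℂ} (hv : n * ‖v‖ ≤ 1 / 4) :
    1 / 2 ≤ ‖(geomMean n).eval (Complex.exp (v * Complex.I))‖ := by
  have hn_ne : (n : ℂ) ≠ 0 := by exact_mod_cast (by lia : n ≠ 0)
  have h_dist : ‖(geomMean n).eval (Complex.exp (v * Complex.I)) - 1‖ ≤ 1 / 2 := by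
    have h_eq : (geomMean n).eval (Complex.exp (v * Complex.I)) - 1 =
        (n : ℂ)⁻¹ * ∑ j ∈ Finset.range n, (Complex.exp (j * (v * Complex.I)) - 1) := by
      rw [eval_geomMean, Finset.sum_sub_distrib, mul_sub]
      simp [Complex.exp_nat_mul, hn_ne]
    rw [h_eq]
    refine norm_inv_mul_sum_range_le hn fun j hj => ?_
    have h_small : ‖(j : ℂ) * (v * Complex.I)‖ ≤ 1 / 4 := by
      rw [norm_mul, norm_mul, Complex.norm_I, mul_one, Complex.norm_natCast]
      exact (mul_le_mul_of_nonneg_right (by exact_mod_cast hj.le) (norm_nonneg v)).trans hv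
    linarith [Complex.norm_exp_sub_one_le (h_small.trans (by norm_num))]
  have h_triangle := norm_sub_norm_le (1 : ℂ) ((geomMean n).eval (Complex.exp (v * Complex.I)))
  rw [norm_one, norm_sub_rev] at h_triangle
  linarith

lemma exists_eval_exp_eq_mul_eval_cos {q : ℂ[X]} {n : ℕ} (hq : q.natDegree ≤ n) :
    ∃ U : ℂ[X], U.natDegree ≤ 2 * n ∧ ∀ u : ℂ, U.eval (Complex.exp (u * Complex.I)) =
      Complex.exp (u * Complex.I) ^ n * q.eval (Complex.cos u) := by
  set V : ℂ[X] := C 2⁻¹ * (X ^ 2 + 1) with hV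
  have hV_degree : V.natDegree ≤ 2 := by rw [hV]; compute_degree
  have hV_eval (u : ℂ) : V.eval (Complex.exp (u * Complex.I)) =
      Complex.exp (u * Complex.I) * Complex.cos u := by
    have h_inv : Complex.exp (u * Complex.I) * Complex.exp (-u * Complex.I) = 1 := by
      rw [← Complex.exp_add]; simp
    simp only [hV, eval_mul, eval_C, eval_add, eval_pow, eval_X, eval_one, Complex.cos]
    linear_combination -(1 / 2) * h_inv
  refine ⟨∑ j ∈ Finset.range (n + 1), C (q.coeff j) * (X ^ (n - j) * V ^ j), ?_, fun u => ?_⟩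
  · refine natDegree_sum_le_of_forall_le _ _ fun j hj => ?_
    have hj_le := Finset.mem_range_succ_iff.1 hj
    have h_pow := natDegree_pow_le_of_le j hV_degree
    refine (natDegree_C_mul_le _ _).trans (natDegree_mul_le.trans ?_)
    rw [natDegree_X_pow]
    lia
  · rw [eval_finsetSum, eval_eq_sum_range' (Nat.lt_succ_of_le hq), Finset.mul_sum]
    refine Finset.sum_congr rfl fun j hj => ?_
    obtain ⟨d, rfl⟩ := Nat.exists_eq_add_of_le (Finset.mem_range_succ_iff.1 hj)
    simp only [eval_mul, eval_C, eval_pow, eval_X, hV_eval, Nat.add_sub_cancel_left]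
    ring

lemma exists_norm_eval_exp_eq_mul_geomMean {q : ℂ[X]} {n : ℕ} (hq : q.natDegree ≤ n) (k : ℕ)
    (θ : ℝ) :
    ∃ R : ℂ[X], R.natDegree ≤ (k + 2) * n ∧ ∀ v : ℂ, ‖R.eval (Complex.exp (v * Complex.I))‖ =
      exp (-v.im) ^ n * (‖(geomMean n).eval (Complex.exp ((v - θ) * Complex.I))‖ ^ k *
        ‖q.eval (Complex.cos v)‖) := by
  obtain ⟨U, hU_degree, hU⟩ := exists_eval_exp_eq_mul_eval_cos hq
  refine ⟨U * (geomMean n ^ k).comp (C (Complex.exp (-θ * Complex.I)) * X), ?_, fun v => ?_⟩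
  · have h_pow := natDegree_pow_le_of_le k (natDegree_geomMean_le n)
    have h_comp : ((geomMean n ^ k).comp (C (Complex.exp (-θ * Complex.I)) * X)).natDegree ≤
        k * n := by
      rw [natDegree_comp]
      exact (Nat.mul_le_mul h_pow ((natDegree_C_mul_le _ _).trans natDegree_X_le)).trans_eq
        (mul_one _)
    exact natDegree_mul_le.trans (by lia)
  · have h_shift : Complex.exp (-θ * Complex.I) * Complex.exp (v * Complex.I) =
        Complex.exp ((v - θ) * Complex.I) := by
      rw [← Complex.exp_add]; ring_nf
    simp only [eval_mul, hU, eval_comp, eval_pow, eval_C, eval_X, h_shift, norm_mul, norm_pow,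
      Complex.norm_exp, Complex.mul_I_re]
    ring

lemma norm_eval_exp_le_integral {R : ℂ[X]} {D : ℕ} (hR : R.natDegree ≤ D) (u : ℂ) :
    ‖R.eval (Complex.exp (u * Complex.I))‖ ≤ (D + 1) * exp (D * |u.im|) *
      ∫ s in 0..2 * π, ‖R.eval (Complex.exp (s * Complex.I))‖ := by
  have h_norm : ‖Complex.exp (u * Complex.I)‖ ≤ exp |u.im| := by
    rw [Complex.norm_exp, Complex.mul_I_re]
    exact exp_le_exp.2 (neg_le_abs _)
  have h_integral : 0 ≤ ∫ s in 0..2 * π, ‖R.eval (Complex.exp (s * Complex.I))‖ :=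
    intervalIntegral.integral_nonneg two_pi_pos.le fun s _ => norm_nonneg _
  have h_average : circleAverage (fun z => ‖R.eval z‖) 0 1 ≤
      ∫ s in 0..2 * π, ‖R.eval (Complex.exp (s * Complex.I))‖ := by
    have h_eq : circleAverage (fun z => ‖R.eval z‖) 0 1 =
        (2 * π)⁻¹ * ∫ s in 0..2 * π, ‖R.eval (Complex.exp (s * Complex.I))‖ := by
      simp [circleAverage_def, circleMap]
    rw [h_eq]
    exact mul_le_of_le_one_left h_integral (inv_le_one_of_one_le₀ (by linarith [pi_gt_three]))
  rw [exp_nat_mul]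
  exact (norm_eval_le_circleAverage hR (one_le_exp (abs_nonneg _)) h_norm).trans
    (mul_le_mul_of_nonneg_left h_average (by positivity))

lemma norm_eval_cos_le_integral {q : ℂ[X]} {n : ℕ} (hn : 1 ≤ n) (hq : q.natDegree ≤ n) (k : ℕ)
    {θ : ℝ} {u : ℂ} (hu : n * ‖u - θ‖ ≤ 1 / 4) :
    ‖q.eval (Complex.cos u)‖ ≤ 2 ^ k * (k + 3) * exp (k + 3) * n *
      ∫ s in 0..2 * π, ‖(geomMean n).eval (Complex.exp ((s - θ : ℝ) * Complex.I))‖ ^ k *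
        ‖q.eval (Complex.cos s)‖ := by
  have hn_one : (1 : ℝ) ≤ n := by exact_mod_cast hn
  obtain ⟨R, hR_degree, hR⟩ := exists_norm_eval_exp_eq_mul_geomMean hq k θ
  have h_im : n * |u.im| ≤ 1 / 4 := by
    have h_abs := Complex.abs_im_le_norm (u - θ)
    rw [Complex.sub_im, Complex.ofReal_im, sub_zero] at h_abs
    exact (mul_le_mul_of_nonneg_left h_abs n.cast_nonneg).trans hu
  have h_lower : exp (-1) * ((1 / 2) ^ k * ‖q.eval (Complex.cos u)‖) ≤
      ‖R.eval (Complex.exp (u * Complex.I))‖ := by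
    rw [hR, ← exp_nat_mul]
    gcongr
    · nlinarith [mul_le_mul_of_nonneg_left (le_abs_self u.im) n.cast_nonneg]
    · exact half_le_norm_eval_geomMean hn hu
  have h_upper := norm_eval_exp_le_integral hR_degree u
  set A := ∫ s in 0..2 * π, ‖(geomMean n).eval (Complex.exp ((s - θ : ℝ) * Complex.I))‖ ^ k *
    ‖q.eval (Complex.cos s)‖ with hA
  have hA_nonneg : 0 ≤ A := intervalIntegral.integral_nonneg two_pi_pos.le fun s _ => by positivity
  rw [show ∫ s in 0..2 * π, ‖R.eval (Complex.exp (s * Complex.I))‖ = A by simp [hA, hR]] at h_upper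
  have h_const : 2 ^ k * exp 1 * (exp (-1) * (1 / 2) ^ k) = 1 := by
    rw [exp_neg, one_div, inv_pow]
    field_simp
  calc ‖q.eval (Complex.cos u)‖
      = 2 ^ k * exp 1 * (exp (-1) * ((1 / 2) ^ k * ‖q.eval (Complex.cos u)‖)) := by
        linear_combination -‖q.eval (Complex.cos u)‖ * h_const
    _ ≤ 2 ^ k * exp 1 * (((k + 3) * n) * exp (k + 2) * A) := by
        refine mul_le_mul_of_nonneg_left ((h_lower.trans h_upper).trans ?_) (by positivity)
        gcongr
        · push_cast; nlinarith
        · push_cast; nlinarith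
    _ = 2 ^ k * (k + 3) * exp (k + 3) * n * A := by
        rw [show (k : ℝ) + 3 = 1 + (k + 2) by ring, exp_add 1]; ring

/-- A kernel of height `N` concentrated within `1 / N` of the diagonal, with decay of order `k`. -/
def decayKernel (N : ℝ) (k : ℕ) (θ s : ℝ) : ℝ := N / (1 + N * |θ - s|) ^ k

/-- The average of `h` over `[0, π]` against `decayKernel N k θ`. -/
def localAverage (N : ℝ) (k : ℕ) (h : ℝ → ℝ) (θ : ℝ) : ℝ :=
  ∫ s in 0..π, decayKernel N k θ s * h s

lemma norm_eval_geomMean_exp_pow_le {n : ℕ} (hn : 1 ≤ n) (k : ℕ) {x t : ℝ} (ht : |t| ≤ π)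
    (hxt : cos x ≤ cos t) :
    ‖(geomMean n).eval (Complex.exp (x * Complex.I))‖ ^ k ≤ 6 ^ k / (1 + n * |t|) ^ k := by
  have h_chord : |t| ≤ 2 * ‖Complex.exp (x * Complex.I) - 1‖ := by
    have h_norm : ‖Complex.exp (x * Complex.I) - 1‖ ^ 2 = 2 - 2 * cos x := by
      rw [← Complex.normSq_eq_norm_sq, Complex.normSq_apply]
      simp only [Complex.sub_re, Complex.sub_im, Complex.exp_ofReal_mul_I_re,
        Complex.exp_ofReal_mul_I_im, Complex.one_re, Complex.one_im]
      linear_combination sin_sq_add_cos_sq x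
    have h_cos := cos_le_one_sub_mul_cos_sq ht
    have h_pi : 1 / 8 ≤ 2 / π ^ 2 := by
      rw [div_le_div_iff₀ (by norm_num) (by positivity)]
      nlinarith [pi_pos, pi_lt_four]
    refine abs_le_of_sq_le_sq ?_ (by positivity)
    nlinarith [mul_le_mul_of_nonneg_right h_pi (sq_nonneg t)]
  have h_mean := norm_eval_geomMean_mul_le hn (Complex.norm_exp_ofReal_mul_I x)
  rw [← div_pow]
  gcongr
  rw [le_div_iff₀ (by positivity)]
  calc ‖(geomMean n).eval (Complex.exp (x * Complex.I))‖ * (1 + n * |t|)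
      ≤ ‖(geomMean n).eval (Complex.exp (x * Complex.I))‖ *
          (2 * (1 + n * ‖Complex.exp (x * Complex.I) - 1‖)) := by
        gcongr
        linarith [mul_le_mul_of_nonneg_left h_chord n.cast_nonneg]
    _ ≤ 6 := by linarith

lemma decayKernel_nonneg {N : ℝ} (hN : 0 ≤ N) (k : ℕ) (θ s : ℝ) : 0 ≤ decayKernel N k θ s := by
  unfold decayKernel; positivity

lemma continuous_decayKernel {N : ℝ} (hN : 0 ≤ N) (k : ℕ) :
    Continuous fun z : ℝ × ℝ => decayKernel N k z.1 z.2 :=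
  continuous_const.div (by fun_prop) fun _ => by positivity

lemma localAverage_nonneg {N : ℝ} (hN : 0 ≤ N) (k : ℕ) {h : ℝ → ℝ} (hh : ∀ s, 0 ≤ h s) (θ : ℝ) :
    0 ≤ localAverage N k h θ :=
  intervalIntegral.integral_nonneg pi_pos.le fun s _ =>
    mul_nonneg (decayKernel_nonneg hN k θ s) (hh s)

lemma integral_zero_two_pi_eq_integral_add_reflect {g : ℝ → ℝ} (hg : Continuous g) :
    ∫ s in 0..2 * π, g s = ∫ s in 0..π, (g s + g (2 * π - s)) := by
  have hg_reflect : Continuous fun s => g (2 * π - s) := by fun_prop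
  rw [intervalIntegral.integral_add (hg.intervalIntegrable _ _)
    (hg_reflect.intervalIntegrable _ _), intervalIntegral.integral_comp_sub_left, sub_zero,
    show 2 * π - π = π by ring, intervalIntegral.integral_add_adjacent_intervals
      (hg.intervalIntegrable _ _) (hg.intervalIntegrable _ _)]

lemma integral_geomMean_mul_le_localAverage {n : ℕ} (hn : 1 ≤ n) (k : ℕ) {h : ℝ → ℝ}
    (h_cont : Continuous h) (h_nonneg : ∀ s, 0 ≤ h s) (h_reflect : ∀ s, h (2 * π - s) = h s)
    {θ : ℝ} (hθ : θ ∈ Icc 0 π) :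
    ∫ s in 0..2 * π, ‖(geomMean n).eval (Complex.exp ((s - θ : ℝ) * Complex.I))‖ ^ k * h s ≤
      2 * 6 ^ k / n * localAverage n k h θ := by
  have hn_pos : (0 : ℝ) < n := by exact_mod_cast hn
  set g : ℝ → ℝ := fun s =>
    ‖(geomMean n).eval (Complex.exp ((s - θ : ℝ) * Complex.I))‖ ^ k * h s with hg
  have hg_cont : Continuous g :=
    (((geomMean n).continuous.comp (by fun_prop)).norm.pow k).mul h_cont
  have h_kernel : ∀ s ∈ Icc 0 π, ∀ x, cos x ≤ cos (θ - s) →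
      ‖(geomMean n).eval (Complex.exp (x * Complex.I))‖ ^ k * h s ≤
        6 ^ k / n * (decayKernel n k θ s * h s) := fun s hs x hx => by
    have h_abs : |θ - s| ≤ π := abs_le.2 ⟨by linarith [hs.2, hθ.1], by linarith [hs.1, hθ.2]⟩
    calc _ ≤ 6 ^ k / (1 + n * |θ - s|) ^ k * h s :=
          mul_le_mul_of_nonneg_right (norm_eval_geomMean_exp_pow_le hn k h_abs hx) (h_nonneg s)
      _ = _ := by rw [decayKernel]; field_simp
  rw [integral_zero_two_pi_eq_integral_add_reflect hg_cont, localAverage,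
    ← intervalIntegral.integral_const_mul]
  refine intervalIntegral.integral_mono_on pi_pos.le
    ((hg_cont.add (hg_cont.comp (by fun_prop))).intervalIntegrable _ _)
    (Continuous.intervalIntegrable ?_ _ _) fun s hs => ?_
  · exact continuous_const.mul (((continuous_decayKernel hn_pos.le k).comp
      (by fun_prop : Continuous fun s => (θ, s))).mul h_cont)
  · have h_direct := h_kernel s hs (s - θ) (by rw [← cos_neg]; simp)
    have h_reflected := h_kernel s hs (2 * π - s - θ) (by
      rw [sub_sub, cos_two_pi_sub, cos_add, cos_sub]
      linarith [mul_nonneg (sin_nonneg_of_mem_Icc hs) (sin_nonneg_of_mem_Icc hθ)])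
    simp only [hg, h_reflect]
    calc _ ≤ _ := add_le_add h_direct h_reflected
      _ = _ := by ring

lemma exists_norm_eval_cos_le_localAverage (k : ℕ) :
    ∃ C > 0, ∀ (n : ℕ) (q : ℂ[X]) (θ : ℝ) (u : ℂ), 1 ≤ n → q.natDegree ≤ n → θ ∈ Icc 0 π →
      n * ‖u - θ‖ ≤ 1 / 4 →
        ‖q.eval (Complex.cos u)‖ ≤
          C * localAverage n k (fun s => ‖q.eval (Complex.cos s)‖) θ := by
  refine ⟨2 ^ k * (k + 3) * exp (k + 3) * (2 * 6 ^ k), by positivity,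
    fun n q θ u hn hq hθ hu => (norm_eval_cos_le_integral hn hq k hu).trans ?_⟩
  have hn_ne : (n : ℝ) ≠ 0 := by exact_mod_cast (by lia : n ≠ 0)
  have h_cont : Continuous fun s : ℝ => ‖q.eval (Complex.cos s)‖ :=
    (q.continuous.comp (by fun_prop)).norm
  have h_reflect (s : ℝ) : ‖q.eval (Complex.cos (2 * π - s : ℝ))‖ = ‖q.eval (Complex.cos s)‖ := by
    push_cast
    rw [Complex.cos_two_pi_sub]
  calc _ ≤ 2 ^ k * (k + 3) * exp (k + 3) * n *
        (2 * 6 ^ k / n * localAverage n k (fun s => ‖q.eval (Complex.cos s)‖) θ) := by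
        gcongr
        exact integral_geomMean_mul_le_localAverage hn k h_cont (fun _ => norm_nonneg _) h_reflect
          hθ
    _ = _ := by field_simp [hn_ne]

/-! ### Cauchy estimates -/

lemma deriv_eval_cos (q : ℂ[X]) :
    deriv (fun u => q.eval (Complex.cos u)) =
      fun u => -(Complex.sin u * q.derivative.eval (Complex.cos u)) :=
  funext fun u => (((q.hasDerivAt _).comp u (Complex.hasDerivAt_cos u)).congr_deriv (by ring)).deriv

lemma deriv_sin_mul_eval_cos (q : ℂ[X]) (u : ℂ) :
    deriv (fun u => -(Complex.sin u * q.eval (Complex.cos u))) u =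
      Complex.sin u ^ 2 * q.derivative.eval (Complex.cos u) -
        Complex.cos u * q.eval (Complex.cos u) :=
  (((Complex.hasDerivAt_sin u).mul ((q.hasDerivAt _).comp u (Complex.hasDerivAt_cos u))).neg
    |>.congr_deriv (by simp only [Function.comp_apply]; ring)).deriv

section DiscBound

variable {q : ℂ[X]} {θ r M : ℝ}

lemma norm_iteratedDeriv_eval_cos_le (hr : 0 < r)
    (hM : ∀ u : ℂ, ‖u - θ‖ ≤ 2 * r → ‖q.eval (Complex.cos u)‖ ≤ M) {ξ : ℂ} (hξ : ‖ξ - θ‖ ≤ r)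
    (j : ℕ) :
    ‖iteratedDeriv j (fun u => q.eval (Complex.cos u)) ξ‖ ≤ j.factorial * M / r ^ j := by
  have h_diff : Differentiable ℂ fun u => q.eval (Complex.cos u) :=
    q.differentiable.comp Complex.differentiable_cos
  refine Complex.norm_iteratedDeriv_le_of_forall_mem_sphere_norm_le j hr h_diff.diffContOnCl
    fun u hu => hM u ?_
  rw [mem_sphere_iff_norm] at hu
  linarith [norm_sub_le_norm_sub_add_norm_sub u ξ θ]

lemma norm_sin_mul_derivative_eval_cos_le (hr : 0 < r)
    (hM : ∀ u : ℂ, ‖u - θ‖ ≤ 2 * r → ‖q.eval (Complex.cos u)‖ ≤ M) {ξ : ℂ} (hξ : ‖ξ - θ‖ ≤ r) :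
    ‖Complex.sin ξ * q.derivative.eval (Complex.cos ξ)‖ ≤ M / r := by
  simpa [iteratedDeriv_one, deriv_eval_cos] using norm_iteratedDeriv_eval_cos_le hr hM hξ 1

lemma norm_sin_sq_mul_derivative_eval_cos_sub_le (hr : 0 < r)
    (hM : ∀ u : ℂ, ‖u - θ‖ ≤ 2 * r → ‖q.eval (Complex.cos u)‖ ≤ M) {ξ : ℂ} (hξ : ‖ξ - θ‖ ≤ r) :
    ‖Complex.sin ξ ^ 2 * q.derivative.derivative.eval (Complex.cos ξ) -
      Complex.cos ξ * q.derivative.eval (Complex.cos ξ)‖ ≤ 2 * M / r ^ 2 := by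
  have h_second := norm_iteratedDeriv_eval_cos_le hr hM hξ 2
  rwa [iteratedDeriv_succ, iteratedDeriv_one, deriv_eval_cos, deriv_sin_mul_eval_cos] at h_second

lemma exists_sin_eq_zero_abs_sub_le (hθ : θ ∈ Icc 0 π) :
    ∃ e : ℝ, sin e = 0 ∧ |θ - e| ≤ 2 * sin θ := by
  have h_half (t : ℝ) (ht : 0 ≤ t) (ht_le : t ≤ π / 2) : t ≤ 2 * sin t := by
    have h_pi : 1 / 2 ≤ 2 / π := by
      rw [div_le_div_iff₀ two_pos pi_pos]; linarith [pi_le_four]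
    linarith [mul_le_sin ht ht_le, mul_le_mul_of_nonneg_right h_pi ht]
  rcases le_total θ (π / 2) with h | h
  · exact ⟨0, sin_zero, by simpa [abs_of_nonneg hθ.1] using h_half θ hθ.1 h⟩
  · refine ⟨π, sin_pi, ?_⟩
    rw [abs_sub_comm, abs_of_nonneg (by linarith [hθ.2]), ← sin_pi_sub]
    exact h_half _ (by linarith [hθ.2]) (by linarith)

lemma norm_derivative_eval_cos_le (hr : 0 < r)
    (hM : ∀ u : ℂ, ‖u - θ‖ ≤ 2 * r → ‖q.eval (Complex.cos u)‖ ≤ M) (hθ : θ ∈ Ioo 0 π) :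
    ‖q.derivative.eval (Complex.cos θ)‖ ≤ 4 * M / r ^ 2 := by
  have h_sin_pos : 0 < sin θ := sin_pos_of_mem_Ioo hθ
  have h_center : ‖(θ : ℂ) - θ‖ ≤ r := by simpa using hr.le
  suffices h : sin θ * ‖q.derivative.eval (Complex.cos θ)‖ ≤ sin θ * (4 * M / r ^ 2) from
    le_of_mul_le_mul_left h h_sin_pos
  have hM_nonneg : 0 ≤ M := (norm_nonneg _).trans (hM θ (by simpa using hr.le))
  have h_norm : sin θ * ‖q.derivative.eval (Complex.cos θ)‖ =
      ‖Complex.sin θ * q.derivative.eval (Complex.cos θ)‖ := by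
    rw [norm_mul, ← Complex.ofReal_sin, Complex.norm_of_nonneg h_sin_pos.le]
  obtain ⟨e, he_sin, he_dist⟩ := exists_sin_eq_zero_abs_sub_le (Ioo_subset_Icc_self hθ)
  rw [h_norm]
  rcases le_or_gt |θ - e| r with h_near | h_far
  · have h_mvt := (convex_closedBall (θ : ℂ) r).norm_image_sub_le_of_norm_deriv_le
      (f := fun u => -(Complex.sin u * q.derivative.eval (Complex.cos u))) (C := 2 * M / r ^ 2)
      (fun u _ => by fun_prop)
      (fun u hu => by
        rw [deriv_sin_mul_eval_cos]
        exact norm_sin_sq_mul_derivative_eval_cos_sub_le hr hM (mem_closedBall_iff_norm.1 hu))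
      (x := e) (y := θ)
      (by rw [mem_closedBall_iff_norm, ← Complex.ofReal_sub, Complex.norm_real, norm_sub_rev]
          exact h_near)
      (Metric.mem_closedBall_self hr.le)
    rw [← Complex.ofReal_sin e, he_sin, ← Complex.ofReal_sub, Complex.norm_real,
      Real.norm_eq_abs] at h_mvt
    simp only [Complex.ofReal_zero, zero_mul, neg_zero, sub_zero, norm_neg] at h_mvt
    calc _ ≤ 2 * M / r ^ 2 * (2 * sin θ) := h_mvt.trans (by gcongr)
      _ = _ := by ring
  · calc _ ≤ M / r := norm_sin_mul_derivative_eval_cos_le hr hM h_center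
      _ = r / 4 * (4 * M / r ^ 2) := by field_simp
      _ ≤ _ := by gcongr; linarith

lemma norm_jacobi_eval_cos_le (hr : 0 < r)
    (hM : ∀ u : ℂ, ‖u - θ‖ ≤ 2 * r → ‖q.eval (Complex.cos u)‖ ≤ M) (hθ : θ ∈ Ioo 0 π) :
    ‖(1 - Complex.cos θ ^ 2) * q.derivative.derivative.eval (Complex.cos θ) -
      6 * Complex.cos θ * q.derivative.eval (Complex.cos θ)‖ ≤ 22 * M / r ^ 2 := by
  have h_center : ‖(θ : ℂ) - θ‖ ≤ r := by simpa using hr.le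
  have h_second := norm_sin_sq_mul_derivative_eval_cos_sub_le hr hM h_center
  have h_first : ‖5 * Complex.cos θ * q.derivative.eval (Complex.cos θ)‖ ≤
      5 * (4 * M / r ^ 2) := by
    have h_cos : ‖5 * Complex.cos θ‖ ≤ 5 := by
      rw [norm_mul, ← Complex.ofReal_cos, Complex.norm_real]
      simpa using abs_cos_le_one θ
    rw [norm_mul]
    exact mul_le_mul h_cos (norm_derivative_eval_cos_le hr hM hθ) (norm_nonneg _) (by norm_num)
  calc _ = ‖(Complex.sin θ ^ 2 * q.derivative.derivative.eval (Complex.cos θ) -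
        Complex.cos θ * q.derivative.eval (Complex.cos θ)) -
          5 * Complex.cos θ * q.derivative.eval (Complex.cos θ)‖ := by
        rw [Complex.sin_sq]; ring_nf
    _ ≤ 2 * M / r ^ 2 + 5 * (4 * M / r ^ 2) := (norm_sub_le _ _).trans (add_le_add h_second h_first)
    _ = _ := by ring

lemma norm_eval_cos_le_add (hr : 0 < r)
    (hM : ∀ u : ℂ, ‖u - θ‖ ≤ 2 * r → ‖q.eval (Complex.cos u)‖ ≤ M) {σ : ℝ} (hσ : |θ - σ| ≤ r) :
    ‖q.eval (Complex.cos θ)‖ ≤ ‖q.eval (Complex.cos σ)‖ + M / r * |θ - σ| := by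
  have h_mvt := (convex_closedBall (θ : ℂ) r).norm_image_sub_le_of_norm_deriv_le
    (f := fun u => q.eval (Complex.cos u)) (C := M / r) (fun u _ => by fun_prop)
    (fun u hu => by
      rw [deriv_eval_cos, norm_neg]
      exact norm_sin_mul_derivative_eval_cos_le hr hM (mem_closedBall_iff_norm.1 hu))
    (x := σ) (y := θ)
    (by rw [mem_closedBall_iff_norm, ← Complex.ofReal_sub, Complex.norm_real, norm_sub_rev]
        exact hσ)
    (Metric.mem_closedBall_self hr.le)
  rw [← Complex.ofReal_sub, Complex.norm_real, Real.norm_eq_abs] at h_mvt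
  linarith [norm_sub_norm_le (q.eval (Complex.cos θ)) (q.eval (Complex.cos σ))]

end DiscBound

/-- `|P(cos s)|`, which carries the problem from `[-1, 1]` to `[0, π]`. -/
def absEvalCos (q : ℝ[X]) (s : ℝ) : ℝ := |q.eval (cos s)|

lemma continuous_absEvalCos (q : ℝ[X]) : Continuous (absEvalCos q) :=
  (q.continuous.comp continuous_cos).abs

lemma Dop_eval_eq (q : ℝ[X]) (x : ℝ) :
    Dop (fun x => q.eval x) x =
      (1 - x ^ 2) * q.derivative.derivative.eval x - 6 * x * q.derivative.eval x := by
  have h_deriv (p : ℝ[X]) : deriv (fun x => p.eval x) = fun x => p.derivative.eval x :=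
    funext fun _ => p.deriv
  simp only [Dop, h_deriv]

/-- A function is slowly varying if its increments at distances up to `1 / (8 N)` are controlled
by its local averages; a polynomial of degree at most `N` in `cos θ` is the example of interest. -/
def IsSlowlyVarying (N : ℝ) (k : ℕ) (A : ℝ) (h : ℝ → ℝ) : Prop :=
  ∀ θ ∈ Icc 0 π, ∀ σ, N * |θ - σ| ≤ 1 / 8 →
    h θ ≤ h σ + A * (N * |θ - σ|) * localAverage N k h θ

lemma exists_abs_Dop_le_and_isSlowlyVarying (k : ℕ) :
    ∃ C > 0, ∀ (n : ℕ) (q : ℝ[X]), 1 ≤ n → q.natDegree ≤ n →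
      (∀ θ ∈ Ioo 0 π, |Dop (fun x => q.eval x) (cos θ)| ≤
        C * n ^ 2 * localAverage n k (absEvalCos q) θ) ∧
      IsSlowlyVarying n k C (absEvalCos q) := by
  obtain ⟨C, hC, h_bound⟩ := exists_norm_eval_cos_le_localAverage k
  refine ⟨22 * 64 * C, by positivity, fun n q hn hq => ?_⟩
  have hn_pos : (0 : ℝ) < n := by exact_mod_cast hn
  set Q : ℂ[X] := q.map (algebraMap ℝ ℂ) with hQ
  have h_eval (p : ℝ[X]) (s : ℝ) :
      (p.map (algebraMap ℝ ℂ)).eval (Complex.cos s) = (p.eval (cos s) : ℝ) := by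
    rw [← Complex.ofReal_cos, eval_map_algebraMap]
    exact aeval_algebraMap_apply_eq_algebraMap_eval (cos s) p
  have h_abs (s : ℝ) : ‖Q.eval (Complex.cos s)‖ = absEvalCos q s := by
    rw [hQ, h_eval, Complex.norm_real, Real.norm_eq_abs, absEvalCos]
  have h_disc : ∀ θ ∈ Icc 0 π, ∀ u : ℂ, ‖u - θ‖ ≤ 2 * (1 / (8 * n)) →
      ‖Q.eval (Complex.cos u)‖ ≤ C * localAverage n k (absEvalCos q) θ := fun θ hθ u hu => by
    rw [← show (fun s : ℝ => ‖Q.eval (Complex.cos s)‖) = absEvalCos q from funext h_abs]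
    refine h_bound n Q θ u hn (natDegree_map_le.trans hq) hθ ?_
    calc n * ‖u - θ‖ ≤ n * (2 * (1 / (8 * n))) := by gcongr
      _ = 1 / 4 := by field_simp; norm_num
  refine ⟨fun θ hθ => ?_, fun θ hθ σ hσ => ?_⟩
  · have h := norm_jacobi_eval_cos_le (by positivity) (h_disc θ (Ioo_subset_Icc_self hθ)) hθ
    rw [hQ, derivative_map, derivative_map, h_eval, h_eval] at h
    rw [Dop_eval_eq, ← Real.norm_eq_abs, ← Complex.norm_real]
    push_cast
    exact h.trans_eq (by field_simp; norm_num)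
  · have h_step : |θ - σ| ≤ 1 / (8 * n) := by
      rw [le_div_iff₀ (by positivity)]; linarith
    have h := norm_eval_cos_le_add (by positivity) (h_disc θ hθ) h_step
    rw [h_abs, h_abs] at h
    have h_average : 0 ≤ localAverage n k (absEvalCos q) θ :=
      localAverage_nonneg hn_pos.le k (fun s => abs_nonneg _) θ
    calc absEvalCos q θ ≤ absEvalCos q σ +
          8 * C * (n * |θ - σ|) * localAverage n k (absEvalCos q) θ :=
          h.trans_eq (by field_simp)
      _ ≤ _ := by gcongr; norm_num

/-! ### The Schur test -/

section SchurTest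

variable {α β : Type*} [MeasurableSpace α] [MeasurableSpace β] {μ : Measure α} {ν : Measure β}

lemma lintegral_mul_le_eLpNorm_withDensity_mul {k f : β → ℝ≥0∞} (hk : Measurable k)
    (hf : Measurable f) {p : ℝ≥0∞} (hp : 1 ≤ p) :
    ∫⁻ y, k y * f y ∂ν ≤
      eLpNorm f p (ν.withDensity k) * (∫⁻ y, k y ∂ν) ^ (1 - 1 / p.toReal) := by
  have h := eLpNorm_le_eLpNorm_mul_rpow_measure_univ (μ := ν.withDensity k) hp
    hf.aestronglyMeasurable
  rwa [eLpNorm_one_eq_lintegral_enorm, lintegral_withDensity_eq_lintegral_mul _ hk hf.enorm,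
    withDensity_apply _ .univ, Measure.restrict_univ, ENNReal.toReal_one, div_one] at h

lemma lintegral_mul_rpow_le {k f : β → ℝ≥0∞} (hk : Measurable k) (hf : Measurable f) {r : ℝ}
    (hr : 1 ≤ r) :
    (∫⁻ y, k y * f y ∂ν) ^ r ≤ (∫⁻ y, k y ∂ν) ^ (r - 1) * ∫⁻ y, k y * f y ^ r ∂ν := by
  have hr_pos : 0 < r := by linarith
  have h := lintegral_mul_le_eLpNorm_withDensity_mul (ν := ν) hk hf (p := ENNReal.ofReal r)
    (by rwa [← ENNReal.ofReal_one, ENNReal.ofReal_le_ofReal_iff hr_pos.le])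
  rw [eLpNorm_eq_lintegral_rpow_enorm_toReal (by simpa using hr_pos) ENNReal.ofReal_ne_top,
    ENNReal.toReal_ofReal hr_pos.le,
    lintegral_withDensity_eq_lintegral_mul _ hk (by fun_prop)] at h
  refine (ENNReal.rpow_le_rpow h hr_pos.le).trans_eq ?_
  rw [ENNReal.mul_rpow_of_nonneg _ _ hr_pos.le, ← ENNReal.rpow_mul, ← ENNReal.rpow_mul, sub_mul,
    one_div_mul_cancel hr_pos.ne', ENNReal.rpow_one, one_mul, mul_comm]
  rfl

variable [SFinite μ] [SFinite ν] {K : α → β → ℝ≥0∞} {C : ℝ≥0∞}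

lemma lintegral_lintegral_mul_le (hK : Measurable (Function.uncurry K))
    (h_col : ∀ᵐ y ∂ν, ∫⁻ x, K x y ∂μ ≤ C) {g : β → ℝ≥0∞} (hg : Measurable g) :
    ∫⁻ x, ∫⁻ y, K x y * g y ∂ν ∂μ ≤ C * ∫⁻ y, g y ∂ν := by
  rw [lintegral_lintegral_swap (by fun_prop), ← lintegral_const_mul _ hg]
  refine lintegral_mono_ae (h_col.mono fun y hy => ?_)
  rw [lintegral_mul_const _ hK.of_uncurry_right]
  exact mul_le_mul' hy le_rfl

lemma eLpNorm_lintegral_mul_le (hK : Measurable (Function.uncurry K))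
    (h_row : ∀ᵐ x ∂μ, ∫⁻ y, K x y ∂ν ≤ C) (h_col : ∀ᵐ y ∂ν, ∫⁻ x, K x y ∂μ ≤ C)
    {f : β → ℝ≥0∞} (hf : Measurable f) {p : ℝ≥0∞} (hp : 1 ≤ p) :
    eLpNorm (fun x => ∫⁻ y, K x y * f y ∂ν) p μ ≤ C * eLpNorm f p ν := by
  rcases eq_or_ne p ⊤ with rfl | hp_top
  · simp only [eLpNorm_exponent_top]
    refine essSup_le_of_ae_le _ (h_row.mono fun x hx => ?_)
    have h := lintegral_mul_le_eLpNorm_withDensity_mul (ν := ν)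
      (hK.of_uncurry_left (x := x)) hf hp
    rw [eLpNorm_exponent_top, ENNReal.toReal_top, div_zero, sub_zero, ENNReal.rpow_one,
      mul_comm] at h
    exact h.trans
      (mul_le_mul' hx (eLpNormEssSup_mono_measure _ (withDensity_absolutelyContinuous _ _)))
  have hp_ne : p ≠ 0 := (zero_lt_one.trans_le hp).ne'
  have hr_one : 1 ≤ p.toReal := by
    rw [← ENNReal.toReal_one]; exact ENNReal.toReal_mono hp_top hp
  set r := p.toReal with hr
  have hr_pos : 0 < r := by linarith
  have h_pow : C ^ (r - 1) * C = C ^ r := by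
    simpa using (ENNReal.rpow_add_of_nonneg (x := C) (r - 1) 1 (by linarith) zero_le_one).symm
  have h_integral : ∫⁻ x, (∫⁻ y, K x y * f y ∂ν) ^ r ∂μ ≤ C ^ r * ∫⁻ y, f y ^ r ∂ν :=
    calc _ ≤ ∫⁻ x, C ^ (r - 1) * ∫⁻ y, K x y * f y ^ r ∂ν ∂μ :=
          lintegral_mono_ae (h_row.mono fun x hx =>
            (lintegral_mul_rpow_le hK.of_uncurry_left hf hr_one).trans
              (mul_le_mul' (ENNReal.rpow_le_rpow hx (by linarith)) le_rfl))
      _ ≤ C ^ (r - 1) * (C * ∫⁻ y, f y ^ r ∂ν) := by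
          rw [lintegral_const_mul _ (by fun_prop)]
          exact mul_le_mul' le_rfl (lintegral_lintegral_mul_le hK h_col (hf.pow_const r))
      _ = C ^ r * ∫⁻ y, f y ^ r ∂ν := by rw [← mul_assoc, h_pow]
  rw [eLpNorm_eq_lintegral_rpow_enorm_toReal hp_ne hp_top,
    eLpNorm_eq_lintegral_rpow_enorm_toReal hp_ne hp_top, ← hr]
  calc _ ≤ (C ^ r * ∫⁻ y, f y ^ r ∂ν) ^ (1 / r) :=
        ENNReal.rpow_le_rpow h_integral (by positivity)
    _ = _ := by
        rw [ENNReal.mul_rpow_of_nonneg _ _ (by positivity), ← ENNReal.rpow_mul,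
          mul_one_div_cancel hr_pos.ne', ENNReal.rpow_one]
        rfl

end SchurTest

/-! ### Regularized sine weights -/

lemma rpow_le_rpow_abs_mul_rpow {a b c : ℝ} (ha : 0 < a) (hb : 0 < b) (hab : a ≤ c * b)
    (hba : b ≤ c * a) (β : ℝ) : a ^ β ≤ c ^ |β| * b ^ β := by
  have hc : 0 < c := pos_of_mul_pos_left (ha.trans_le hab) hb.le
  rcases le_total 0 β with hβ | hβ
  · rw [abs_of_nonneg hβ, ← mul_rpow hc.le hb.le]
    exact rpow_le_rpow ha.le hab hβ
  · calc a ^ β ≤ (b / c) ^ β :=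
          rpow_le_rpow_of_nonpos (by positivity) ((div_le_iff₀' hc).2 hba) hβ
      _ = c ^ |β| * b ^ β := by
          rw [abs_of_nonpos hβ, div_rpow hb.le hc.le, rpow_neg hc.le, div_eq_inv_mul]

/-- The sine regularized at scale `1 / N`: a weight comparable to `sin` away from the zeros of
`sin`, but essentially constant on the scale `1 / N` of `decayKernel N`. -/
def regularizedSin (N θ : ℝ) : ℝ := sin θ + 1 / N

lemma regularizedSin_pos {N θ : ℝ} (hN : 0 < N) (hθ : 0 ≤ sin θ) : 0 < regularizedSin N θ :=
  add_pos_of_nonneg_of_pos hθ (by positivity)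

lemma continuous_regularizedSin (N : ℝ) : Continuous (regularizedSin N) :=
  continuous_sin.add continuous_const

lemma regularizedSin_le_mul {N θ : ℝ} (hN : 0 < N) (hθ : 0 ≤ sin θ) (s : ℝ) :
    regularizedSin N s ≤ (1 + N * |θ - s|) * regularizedSin N θ := by
  have h_lipschitz : sin s ≤ sin θ + |θ - s| := by
    have := (abs_le.1 (abs_sin_sub_sin_le θ s)).1
    linarith
  calc regularizedSin N s ≤ regularizedSin N θ + |θ - s| := by
        unfold regularizedSin; linarith
    _ ≤ regularizedSin N θ + |θ - s| + N * |θ - s| * sin θ :=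
        le_add_of_nonneg_right (by positivity)
    _ = (1 + N * |θ - s|) * regularizedSin N θ := by
        unfold regularizedSin; field_simp; ring

lemma decayKernel_comm (N : ℝ) (k : ℕ) (θ s : ℝ) :
    decayKernel N k θ s = decayKernel N k s θ := by
  simp only [decayKernel, abs_sub_comm]

lemma decayKernel_mul_regularizedSin_rpow_le {N β : ℝ} {g : ℕ} (hN : 0 < N) (hβ : |β| ≤ g)
    {θ s : ℝ} (hθ : 0 ≤ sin θ) (hs : 0 ≤ sin s) :
    decayKernel N (g + 2) θ s * regularizedSin N θ ^ β ≤
      decayKernel N 2 θ s * regularizedSin N s ^ β := by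
  set c := 1 + N * |θ - s| with hc
  have hc_one : 1 ≤ c := le_add_of_nonneg_right (by positivity)
  have hs_pos := rpow_pos_of_pos (regularizedSin_pos hN hs) β
  have h_compare : regularizedSin N θ ^ β ≤ c ^ g * regularizedSin N s ^ β :=
    calc regularizedSin N θ ^ β ≤ c ^ |β| * regularizedSin N s ^ β :=
          rpow_le_rpow_abs_mul_rpow (regularizedSin_pos hN hθ) (regularizedSin_pos hN hs)
            (by rw [abs_sub_comm]; exact regularizedSin_le_mul hN hs θ)
            (regularizedSin_le_mul hN hθ s) β
      _ ≤ c ^ g * regularizedSin N s ^ β := by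
          rw [← rpow_natCast]
          exact mul_le_mul_of_nonneg_right (rpow_le_rpow_of_exponent_le hc_one hβ) hs_pos.le
  calc decayKernel N (g + 2) θ s * regularizedSin N θ ^ β
      ≤ decayKernel N (g + 2) θ s * (c ^ g * regularizedSin N s ^ β) :=
        mul_le_mul_of_nonneg_left h_compare (decayKernel_nonneg hN.le _ _ _)
    _ = decayKernel N 2 θ s * regularizedSin N s ^ β := by
        have hc_ne : c ≠ 0 := by linarith
        simp only [decayKernel, ← hc, pow_add]; field_simp

lemma lintegral_decayKernel_le {N : ℝ} (hN : 0 < N) (θ : ℝ) :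
    ∫⁻ s, ENNReal.ofReal (decayKernel N 2 θ s) ≤ ENNReal.ofReal π := by
  have h_le (s : ℝ) : decayKernel N 2 θ s ≤ N * (1 + (N * (s - θ)) ^ 2)⁻¹ := by
    rw [decayKernel, div_eq_mul_inv, mul_pow, ← sq_abs (s - θ), ← mul_pow, abs_sub_comm]
    have : 0 ≤ N * |s - θ| := by positivity
    gcongr
    nlinarith
  have h_integrable : Integrable fun s : ℝ => N * (1 + (N * (s - θ)) ^ 2)⁻¹ :=
    ((integrable_inv_one_add_sq.comp_mul_left' hN.ne').comp_sub_right θ).const_mul N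
  have h_integral : ∫ s : ℝ, N * (1 + (N * (s - θ)) ^ 2)⁻¹ = π := by
    rw [integral_const_mul, integral_sub_right_eq_self (fun s : ℝ => (1 + (N * s) ^ 2)⁻¹),
      Measure.integral_comp_mul_left (fun s : ℝ => (1 + s ^ 2)⁻¹), integral_univ_inv_one_add_sq,
      abs_of_pos (by positivity), smul_eq_mul, mul_inv_cancel_left₀ hN.ne']
  calc _ ≤ ∫⁻ s, ENNReal.ofReal (N * (1 + (N * (s - θ)) ^ 2)⁻¹) :=
        lintegral_mono fun s => ENNReal.ofReal_le_ofReal (h_le s)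
    _ = ENNReal.ofReal π := by
        rw [← ofReal_integral_eq_lintegral_ofReal h_integrable (ae_of_all _ fun s => by positivity),
          h_integral]

/-- A power singularity on `(0, 2 / N]`, of mass independent of `N`, which dominates
`N * (sin θ / regularizedSin N θ) ^ γ` for `γ ≤ 0` near the endpoint `0`, where `sin θ < 1 / N`. -/
def endpointBump (N γ θ : ℝ) : ℝ≥0∞ :=
  (Ioc 0 (2 / N)).indicator (fun θ => ENNReal.ofReal (N * (N / 4 * θ) ^ γ)) θ

lemma measurable_endpointBump (N γ : ℝ) : Measurable (endpointBump N γ) :=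
  Measurable.indicator (by fun_prop) measurableSet_Ioc

lemma lintegral_endpointBump {N γ : ℝ} (hN : 0 < N) (hγ : -1 < γ) :
    ∫⁻ θ, endpointBump N γ θ = ENNReal.ofReal (4 * ((1 / 2) ^ (γ + 1) / (γ + 1))) := by
  have h_intervalIntegrable :
      IntervalIntegrable (fun θ : ℝ => N * (N / 4 * θ) ^ γ) volume 0 (2 / N) := by
    have h := (intervalIntegral.intervalIntegrable_rpow' (a := 0) (b := 1 / 2) hγ).comp_mul_left
      (c := N / 4)
    rw [zero_div, show (1 : ℝ) / 2 / (N / 4) = 2 / N by field_simp; norm_num] at h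
    exact h.const_mul N
  have h_nonneg : ∀ᵐ θ ∂volume.restrict (Ioc 0 (2 / N)), 0 ≤ N * (N / 4 * θ) ^ γ :=
    (ae_restrict_mem measurableSet_Ioc).mono fun θ hθ => by
      have := hθ.1
      positivity
  simp only [endpointBump]
  rw [lintegral_indicator measurableSet_Ioc, ← ofReal_integral_eq_lintegral_ofReal
    ((intervalIntegrable_iff_integrableOn_Ioc_of_le (by positivity)).1 h_intervalIntegrable)
    h_nonneg, ← intervalIntegral.integral_of_le (by positivity),
    intervalIntegral.integral_const_mul,
    intervalIntegral.integral_comp_mul_left (fun x : ℝ => x ^ γ) (by positivity : N / 4 ≠ 0),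
    integral_rpow (Or.inl hγ), mul_zero, zero_rpow (by linarith), sub_zero, smul_eq_mul,
    show N / 4 * (2 / N) = 1 / 2 by field_simp; norm_num]
  congr 1
  field_simp

lemma decayKernel_mul_rpow_le_endpointBump {N γ s θ : ℝ} (hN : 0 < N) (hγ : γ ≤ 0)
    (hθ : θ ∈ Ioc 0 (π / 2)) (h_sin : sin θ < 1 / N) :
    ENNReal.ofReal (decayKernel N 2 θ s * (sin θ / regularizedSin N θ) ^ γ) ≤
      endpointBump N γ θ := by
  have hθ_pos : 0 < θ := hθ.1
  have h_half : θ / 2 ≤ sin θ :=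
    calc θ / 2 ≤ 2 / π * θ := by
          rw [div_mul_eq_mul_div, le_div_iff₀ pi_pos]
          nlinarith [pi_le_four]
      _ ≤ sin θ := mul_le_sin hθ.1.le hθ.2
  have h_mem : θ ∈ Ioc 0 (2 / N) := by
    refine ⟨hθ.1, ?_⟩
    have : (2 : ℝ) / N = 2 * (1 / N) := by ring
    linarith
  have h_regularized_pos : 0 < regularizedSin N θ := regularizedSin_pos hN (by linarith)
  have h_ratio : N / 4 * θ ≤ sin θ / regularizedSin N θ := by
    rw [le_div_iff₀ h_regularized_pos]
    calc N / 4 * θ * regularizedSin N θ ≤ N / 4 * θ * (2 * (1 / N)) := by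
          unfold regularizedSin; gcongr; linarith
      _ = θ / 2 := by field_simp; norm_num
      _ ≤ sin θ := h_half
  have h_kernel : decayKernel N 2 θ s ≤ N :=
    div_le_self hN.le (one_le_pow₀ (le_add_of_nonneg_right (by positivity)))
  rw [endpointBump, indicator_of_mem h_mem]
  exact ENNReal.ofReal_le_ofReal (mul_le_mul h_kernel
    (rpow_le_rpow_of_nonpos (by positivity) h_ratio hγ)
    (rpow_nonneg (div_nonneg (by linarith) h_regularized_pos.le) γ) hN.le)

lemma decayKernel_mul_rpow_le {N γ s θ : ℝ} (hN : 0 < N) (hγ : γ ≤ 0) (hθ : θ ∈ Ioo 0 π) :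
    ENNReal.ofReal (decayKernel N 2 θ s * (sin θ / regularizedSin N θ) ^ γ) ≤
      ENNReal.ofReal (2 ^ (-γ)) * ENNReal.ofReal (decayKernel N 2 s θ) +
        (endpointBump N γ θ + endpointBump N γ (π - θ)) := by
  have h_sin_pos := sin_pos_of_mem_Ioo hθ
  have h_regularized_pos := regularizedSin_pos hN h_sin_pos.le
  rcases le_or_gt (1 / N) (sin θ) with h_large | h_small
  · refine le_add_right ?_
    rw [← ENNReal.ofReal_mul (by positivity), mul_comm, decayKernel_comm]
    have h_ratio : (2 : ℝ)⁻¹ ≤ sin θ / regularizedSin N θ := by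
      rw [le_div_iff₀ h_regularized_pos, regularizedSin]; linarith
    refine ENNReal.ofReal_le_ofReal
      (mul_le_mul_of_nonneg_right ?_ (decayKernel_nonneg hN.le _ _ _))
    rw [rpow_neg zero_le_two, ← inv_rpow zero_le_two]
    exact rpow_le_rpow_of_nonpos (by positivity) h_ratio hγ
  · refine le_add_left ?_
    rcases le_total θ (π / 2) with h_left | h_right
    · exact le_add_right (decayKernel_mul_rpow_le_endpointBump hN hγ ⟨hθ.1, h_left⟩ h_small)
    · refine le_add_left ?_
      have h := decayKernel_mul_rpow_le_endpointBump (s := π - s) hN hγ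
        (θ := π - θ) ⟨by linarith [hθ.2], by linarith⟩ (by rwa [sin_pi_sub])
      rwa [decayKernel, regularizedSin, sin_pi_sub, sub_sub_sub_cancel_left, abs_sub_comm] at h

/-- The domain of the angle `θ` in the substitution `x = cos θ`. -/
abbrev angleMeasure : Measure ℝ := volume.restrict (Ioo 0 π)

lemma exists_lintegral_decayKernel_mul_rpow_le {γ : ℝ} (hγ : -1 < γ) (hγ' : γ ≤ 0) :
    ∃ C : NNReal, ∀ N > 0, ∀ s, ∫⁻ θ, ENNReal.ofReal
      (decayKernel N 2 θ s * (sin θ / regularizedSin N θ) ^ γ) ∂angleMeasure ≤ C := by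
  set b : ℝ := 4 * ((1 / 2) ^ (γ + 1) / (γ + 1))
  refine ⟨((2 : ℝ) ^ (-γ)).toNNReal * Real.toNNReal π + (b.toNNReal + b.toNNReal), fun N hN s => ?_⟩
  have h_meas := measurable_endpointBump N γ
  calc _ ≤ ∫⁻ θ in Ioo 0 π, (ENNReal.ofReal (2 ^ (-γ)) * ENNReal.ofReal (decayKernel N 2 s θ) +
          (endpointBump N γ θ + endpointBump N γ (π - θ))) :=
        setLIntegral_mono' measurableSet_Ioo fun θ hθ => decayKernel_mul_rpow_le hN hγ' hθ
    _ ≤ ∫⁻ θ, (ENNReal.ofReal (2 ^ (-γ)) * ENNReal.ofReal (decayKernel N 2 s θ) +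
          (endpointBump N γ θ + endpointBump N γ (π - θ))) := setLIntegral_le_lintegral _ _
    _ = ENNReal.ofReal (2 ^ (-γ)) * (∫⁻ θ, ENNReal.ofReal (decayKernel N 2 s θ)) +
          (ENNReal.ofReal b + ENNReal.ofReal b) := by
        rw [lintegral_add_right _ (by fun_prop), lintegral_add_left h_meas,
          lintegral_const_mul' _ _ ENNReal.ofReal_ne_top,
          lintegral_sub_left_eq_self (endpointBump N γ), lintegral_endpointBump hN hγ]
    _ ≤ _ := by
        push_cast
        exact add_le_add (mul_le_mul' le_rfl (lintegral_decayKernel_le hN s)) le_rfl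

lemma eLpNorm_withDensity_ofReal {α : Type*} [MeasurableSpace α] {μ : Measure α} {ρ : α → ℝ}
    (hρ : Measurable ρ) (hρ_pos : ∀ᵐ x ∂μ, 0 < ρ x) {p : ℝ≥0∞} (hp : p ≠ 0) (f : α → ℝ) :
    eLpNorm f p (μ.withDensity fun x => ENNReal.ofReal (ρ x)) =
      eLpNorm (fun x => f x * ρ x ^ (1 / p.toReal)) p μ := by
  rcases eq_or_ne p ⊤ with rfl | hp_top
  · have h_ac := withDensity_absolutelyContinuous' (μ := μ) hρ.ennreal_ofReal.aemeasurable
      (hρ_pos.mono fun x hx => (ENNReal.ofReal_pos.2 hx).ne')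
    simp only [ENNReal.toReal_top, div_zero, rpow_zero, mul_one, eLpNorm_exponent_top]
    exact le_antisymm (eLpNormEssSup_mono_measure _ (withDensity_absolutelyContinuous _ _))
      (eLpNormEssSup_mono_measure _ h_ac)
  · have hr_pos := ENNReal.toReal_pos hp hp_top
    rw [eLpNorm_eq_lintegral_rpow_enorm_toReal hp hp_top,
      eLpNorm_eq_lintegral_rpow_enorm_toReal hp hp_top,
      lintegral_withDensity_eq_lintegral_mul_non_measurable _ hρ.ennreal_ofReal
        (ae_of_all _ fun x => ENNReal.ofReal_lt_top)]
    congr 1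
    refine lintegral_congr_ae (hρ_pos.mono fun x hx => ?_)
    simp only [Pi.mul_apply]
    rw [enorm_mul, ENNReal.mul_rpow_of_nonneg _ _ hr_pos.le,
      Real.enorm_of_nonneg (rpow_nonneg hx.le _), ENNReal.ofReal_rpow_of_nonneg
        (rpow_nonneg hx.le _) hr_pos.le, ← rpow_mul hx.le, one_div_mul_cancel hr_pos.ne', rpow_one,
      mul_comm]

lemma ofReal_localAverage {N : ℝ} (hN : 0 ≤ N) (k : ℕ) {h : ℝ → ℝ} (h_cont : Continuous h)
    (h_nonneg : ∀ s, 0 ≤ h s) (θ : ℝ) : ENNReal.ofReal (localAverage N k h θ) =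
      ∫⁻ s, ENNReal.ofReal (decayKernel N k θ s * h s) ∂angleMeasure := by
  have h_integrand : Continuous fun s => decayKernel N k θ s * h s :=
    ((continuous_decayKernel hN k).comp (continuous_const.prodMk continuous_id)).mul h_cont
  rw [localAverage, intervalIntegral.integral_of_le pi_pos.le, integral_Ioc_eq_integral_Ioo,
    ofReal_integral_eq_lintegral_ofReal]
  · exact h_integrand.integrableOn_Icc.mono_set Ioo_subset_Icc_self
  · exact ae_of_all _ fun s => mul_nonneg (decayKernel_nonneg hN _ _ _) (h_nonneg s)

lemma ofReal_localAverage_mul_regularizedSin_rpow_le {N β : ℝ} (hN : 0 < N) {g : ℕ}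
    (hg : |β| ≤ g) {h : ℝ → ℝ} (h_cont : Continuous h) (h_nonneg : ∀ s, 0 ≤ h s) {θ : ℝ}
    (hθ : 0 ≤ sin θ) :
    ENNReal.ofReal (localAverage N (g + 2) h θ * regularizedSin N θ ^ β) ≤
      ∫⁻ s, ENNReal.ofReal (decayKernel N 2 θ s) *
        ENNReal.ofReal (h s * regularizedSin N s ^ β) ∂angleMeasure := by
  have h_weight := rpow_nonneg (regularizedSin_pos hN hθ).le β
  rw [mul_comm, ENNReal.ofReal_mul h_weight, ofReal_localAverage hN.le _ h_cont h_nonneg,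
    ← lintegral_const_mul' _ _ ENNReal.ofReal_ne_top]
  refine setLIntegral_mono' measurableSet_Ioo fun s hs => ?_
  rw [← ENNReal.ofReal_mul h_weight, ← ENNReal.ofReal_mul (decayKernel_nonneg hN.le _ _ _)]
  have h := mul_le_mul_of_nonneg_left
    (decayKernel_mul_regularizedSin_rpow_le hN hg hθ (sin_pos_of_mem_Ioo hs).le) (h_nonneg s)
  exact ENNReal.ofReal_le_ofReal (by linarith)

lemma ae_sin_pos_angleMeasure : ∀ᵐ θ ∂angleMeasure, 0 < sin θ :=
  (ae_restrict_mem measurableSet_Ioo).mono fun _ => sin_pos_of_mem_Ioo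

lemma eLpNorm_localAverage_mul_le {μ : Measure ℝ} [SFinite μ] (hμ : μ ≪ angleMeasure) {C : ℝ≥0∞}
    {N β : ℝ} (hN : 0 < N) {g : ℕ} (hg : |β| ≤ g) (hC : ENNReal.ofReal π ≤ C)
    (h_col : ∀ s, ∫⁻ θ, ENNReal.ofReal (decayKernel N 2 θ s) ∂μ ≤ C) {h : ℝ → ℝ}
    (h_cont : Continuous h) (h_nonneg : ∀ s, 0 ≤ h s) {p : ℝ≥0∞} (hp : 1 ≤ p) :
    eLpNorm (fun θ => localAverage N (g + 2) h θ * regularizedSin N θ ^ β) p μ ≤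
      C * eLpNorm (fun θ => h θ * regularizedSin N θ ^ β) p angleMeasure := by
  set f : ℝ → ℝ≥0∞ := fun s => ENNReal.ofReal (h s * regularizedSin N s ^ β)
  have hf : Measurable f :=
    (h_cont.measurable.mul ((continuous_regularizedSin N).measurable.pow_const β)).ennreal_ofReal
  have hK : Measurable (Function.uncurry fun θ s => ENNReal.ofReal (decayKernel N 2 θ s)) :=
    (continuous_decayKernel hN.le 2).measurable.ennreal_ofReal
  have h_enorm {u : ℝ → ℝ} (hu : ∀ θ, 0 ≤ u θ) {θ : ℝ} (hθ : 0 < sin θ) :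
      ‖u θ * regularizedSin N θ ^ β‖ₑ = ENNReal.ofReal (u θ * regularizedSin N θ ^ β) :=
    Real.enorm_of_nonneg (mul_nonneg (hu θ) (rpow_nonneg (regularizedSin_pos hN hθ.le).le β))
  calc _ ≤ eLpNorm (fun θ => ∫⁻ s, ENNReal.ofReal (decayKernel N 2 θ s) * f s ∂angleMeasure) p μ :=
        eLpNorm_mono_enorm_ae ((ae_sin_pos_angleMeasure.filter_mono hμ.ae_le).mono fun θ hθ => by
          rw [enorm_eq_self, h_enorm (localAverage_nonneg hN.le _ h_nonneg) hθ]
          exact ofReal_localAverage_mul_regularizedSin_rpow_le hN hg h_cont h_nonneg hθ.le)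
    _ ≤ C * eLpNorm f p angleMeasure :=
        eLpNorm_lintegral_mul_le hK
          (ae_of_all _ fun θ => (setLIntegral_le_lintegral _ _).trans
            ((lintegral_decayKernel_le hN θ).trans hC))
          (ae_of_all _ h_col) hf hp
    _ = _ := by
        congr 1
        refine eLpNorm_congr_enorm_ae (ae_sin_pos_angleMeasure.mono fun θ hθ => ?_)
        rw [enorm_eq_self, h_enorm h_nonneg hθ]

lemma eLpNorm_localAverage_mul_regularizedSin_rpow_le {N β : ℝ} (hN : 0 < N) {g : ℕ}
    (hg : |β| ≤ g) {h : ℝ → ℝ} (h_cont : Continuous h) (h_nonneg : ∀ s, 0 ≤ h s) {p : ℝ≥0∞}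
    (hp : 1 ≤ p) :
    eLpNorm (fun θ => localAverage N (g + 2) h θ * regularizedSin N θ ^ β) p angleMeasure ≤
      ENNReal.ofReal π * eLpNorm (fun θ => h θ * regularizedSin N θ ^ β) p angleMeasure := by
  refine eLpNorm_localAverage_mul_le .rfl hN hg le_rfl (fun s => ?_) h_cont h_nonneg hp
  simp only [decayKernel_comm N 2 _ s]
  exact (setLIntegral_le_lintegral _ _).trans (lintegral_decayKernel_le hN s)

lemma sin_rpow_le_regularizedSin_rpow_mul {N θ : ℝ} (hN : 0 < N) (hθ : 0 < sin θ) (β : ℝ) :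
    sin θ ^ β ≤ regularizedSin N θ ^ β * (sin θ / regularizedSin N θ) ^ min β 0 := by
  have h_pos := regularizedSin_pos hN hθ.le
  have h_ratio_pos : 0 < sin θ / regularizedSin N θ := div_pos hθ h_pos
  have h_ratio_le : sin θ / regularizedSin N θ ≤ 1 :=
    (div_le_one h_pos).2 (le_add_of_nonneg_right (by positivity))
  calc sin θ ^ β = regularizedSin N θ ^ β * (sin θ / regularizedSin N θ) ^ β := by
        rw [← mul_rpow h_pos.le h_ratio_pos.le, mul_div_cancel₀ _ h_pos.ne']
    _ ≤ _ := mul_le_mul_of_nonneg_left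
        (rpow_le_rpow_of_exponent_ge h_ratio_pos h_ratio_le (min_le_left _ _))
        (rpow_nonneg h_pos.le _)

lemma exists_eLpNorm_localAverage_mul_sin_rpow_le {p : ℝ≥0∞} (hp : 1 ≤ p) {β : ℝ}
    (hβ : -1 < β * p.toReal) (hβ_top : p = ⊤ → 0 ≤ β) {g : ℕ} (hg : |β| ≤ g) :
    ∃ C : NNReal, ∀ N > 0, ∀ h : ℝ → ℝ, Continuous h → (∀ s, 0 ≤ h s) →
      eLpNorm (fun θ => localAverage N (g + 2) h θ * sin θ ^ β) p angleMeasure ≤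
        C * eLpNorm (fun θ => h θ * regularizedSin N θ ^ β) p angleMeasure := by
  have hp_ne : p ≠ 0 := (zero_lt_one.trans_le hp).ne'
  set b := min β 0 with hb
  have h_exponent : b * p.toReal * (1 / p.toReal) = b := by
    rcases eq_or_ne p ⊤ with rfl | hp_top
    · simp [hb, hβ_top rfl]
    · rw [mul_assoc, mul_one_div_cancel (ENNReal.toReal_pos hp_ne hp_top).ne', mul_one]
  obtain ⟨C, hC⟩ := exists_lintegral_decayKernel_mul_rpow_le (γ := b * p.toReal)
    (by rcases min_choice β 0 with h | h <;> simp [hb, h, hβ])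
    (mul_nonpos_of_nonpos_of_nonneg (min_le_right _ _) ENNReal.toReal_nonneg)
  refine ⟨max C (Real.toNNReal π), fun N hN h h_cont h_nonneg => ?_⟩
  set ρ : ℝ → ℝ := fun θ => (sin θ / regularizedSin N θ) ^ (b * p.toReal)
  have hρ : Measurable ρ := by
    have := (continuous_regularizedSin N).measurable
    fun_prop
  have hρ_pos : ∀ᵐ θ ∂angleMeasure, 0 < ρ θ := ae_sin_pos_angleMeasure.mono fun θ hθ =>
    rpow_pos_of_pos (div_pos hθ (regularizedSin_pos hN hθ.le)) _
  calc eLpNorm (fun θ => localAverage N (g + 2) h θ * sin θ ^ β) p angleMeasure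
      ≤ eLpNorm (fun θ => localAverage N (g + 2) h θ * regularizedSin N θ ^ β *
          ρ θ ^ (1 / p.toReal)) p angleMeasure := by
        refine eLpNorm_mono_ae_real (ae_sin_pos_angleMeasure.mono fun θ hθ => ?_)
        have h_average := localAverage_nonneg hN.le (g + 2) h_nonneg θ
        rw [← rpow_mul (div_pos hθ (regularizedSin_pos hN hθ.le)).le, h_exponent, mul_assoc,
          Real.norm_of_nonneg (mul_nonneg h_average (rpow_nonneg hθ.le β))]
        exact mul_le_mul_of_nonneg_left (sin_rpow_le_regularizedSin_rpow_mul hN hθ β) h_average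
    _ = eLpNorm (fun θ => localAverage N (g + 2) h θ * regularizedSin N θ ^ β) p
          (angleMeasure.withDensity fun θ => ENNReal.ofReal (ρ θ)) :=
        (eLpNorm_withDensity_ofReal hρ hρ_pos hp_ne _).symm
    _ ≤ _ := by
        refine eLpNorm_localAverage_mul_le (withDensity_absolutelyContinuous _ _) hN hg
          (by push_cast; exact le_max_right _ _) (fun s => ?_) h_cont h_nonneg hp
        rw [lintegral_withDensity_eq_lintegral_mul_non_measurable _ hρ.ennreal_ofReal
          (ae_of_all _ fun x => ENNReal.ofReal_lt_top)]
        simp only [Pi.mul_apply, ← ENNReal.ofReal_mul' (decayKernel_nonneg hN.le 2 _ s),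
          mul_comm (ρ _)]
        exact (hC N hN s).trans (by push_cast; exact le_max_left _ _)

/-! ### The substitution `x = cos θ` -/

lemma map_cos_withDensity_sin :
    Measure.map cos (angleMeasure.withDensity fun θ => ENNReal.ofReal (sin θ)) =
      volume.restrict (Icc (-1) 1) := by
  have h := map_withDensity_abs_det_fderiv_eq_addHaar volume
    (measurableSet_Icc (a := (0 : ℝ)) (b := π)).nullMeasurableSet
    (fun θ _ => (hasDerivAt_cos θ).hasDerivWithinAt.hasFDerivWithinAt) injOn_cos
  simp only [ContinuousLinearMap.det_toSpanSingleton, abs_neg, bijOn_cos.image_eq] at h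
  rw [← h, angleMeasure, restrict_Ioo_eq_restrict_Icc]
  congr 1
  refine withDensity_congr_ae ((ae_restrict_mem measurableSet_Icc).mono fun θ hθ => ?_)
  simp only [abs_of_nonneg (sin_nonneg_of_mem_Icc hθ)]

lemma wnorm_eq_eLpNorm_comp_cos {p : ℝ≥0∞} (hp : p ≠ 0) (α : ℝ) {f : ℝ → ℝ} (hf : Measurable f) :
    wnorm p α f =
      eLpNorm (fun θ => f (cos θ) * sin θ ^ (2 * α + 1 / p.toReal)) p angleMeasure := by
  rw [wnorm, ← map_cos_withDensity_sin, eLpNorm_map_measure (by fun_prop) (by fun_prop),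
    eLpNorm_withDensity_ofReal (by fun_prop) ae_sin_pos_angleMeasure hp]
  refine eLpNorm_congr_ae (ae_sin_pos_angleMeasure.mono fun θ hθ => ?_)
  simp only [Function.comp_apply]
  rw [← sin_sq, ← rpow_natCast, ← rpow_mul hθ.le, mul_assoc, ← rpow_add hθ, Nat.cast_ofNat]

/-! ### Removal of the regularization -/

lemma eLpNorm_comp_affine_le {E : Type*} [NormedAddCommGroup E] {a b : ℝ} (ha : a ≠ 0)
    {s t : Set ℝ} (h_maps : MapsTo (fun x => a * x + b) s t) (p : ℝ≥0∞) (f : ℝ → E) :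
    eLpNorm (fun x => f (a * x + b)) p (volume.restrict s) ≤
      ENNReal.ofReal |a⁻¹| ^ (1 / p).toReal * eLpNorm f p (volume.restrict t) := by
  have h_embedding := (affineHomeomorph a b ha).measurableEmbedding
  have h_map : Measure.map (affineHomeomorph a b ha) volume = ENNReal.ofReal |a⁻¹| • volume := by
    rw [show (affineHomeomorph a b ha : ℝ → ℝ) = (· + b) ∘ (a * ·) from rfl,
      ← Measure.map_map (by fun_prop) (by fun_prop), Real.map_volume_mul_left ha,
      Measure.map_smul, map_add_right_eq_self]
  calc eLpNorm (f ∘ affineHomeomorph a b ha) p (volume.restrict s)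
      ≤ eLpNorm (f ∘ affineHomeomorph a b ha) p
          (volume.restrict (affineHomeomorph a b ha ⁻¹' t)) :=
        eLpNorm_mono_measure _ (Measure.restrict_mono h_maps le_rfl)
    _ = eLpNorm f p (ENNReal.ofReal |a⁻¹| • volume.restrict t) := by
        rw [← h_embedding.eLpNorm_map_measure, ← h_embedding.restrict_map, h_map,
          Measure.restrict_smul]
    _ ≤ _ := eLpNorm_smul_measure_le _ _ _ _

lemma continuous_localAverage {N : ℝ} (hN : 0 ≤ N) (k : ℕ) {h : ℝ → ℝ} (h_cont : Continuous h) :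
    Continuous (localAverage N k h) :=
  intervalIntegral.continuous_parametric_intervalIntegral_of_continuous'
    ((continuous_decayKernel hN k).mul (h_cont.comp continuous_snd)) _ _

lemma eLpNorm_mul_regularizedSin_rpow_lt_top {N : ℝ} (hN : 0 < N) (β : ℝ) {h : ℝ → ℝ}
    (h_cont : Continuous h) (p : ℝ≥0∞) :
    eLpNorm (fun θ => h θ * regularizedSin N θ ^ β) p angleMeasure < ⊤ := by
  have h_contOn : ContinuousOn (fun θ => h θ * regularizedSin N θ ^ β) (Icc 0 π) :=
    h_cont.continuousOn.mul ((continuous_regularizedSin N).continuousOn.rpow_const fun θ hθ =>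
      .inl (regularizedSin_pos hN (sin_nonneg_of_mem_Icc hθ)).ne')
  obtain ⟨M, hM⟩ := isCompact_Icc.exists_bound_of_continuousOn h_contOn
  rw [angleMeasure, restrict_Ioo_eq_restrict_Icc]
  exact (MemLp.of_bound (h_contOn.aestronglyMeasurable measurableSet_Icc) M
    ((ae_restrict_mem measurableSet_Icc).mono hM)).2

lemma regularizedSin_rpow_le_sin_rpow {N δ θ : ℝ} (hN : 1 ≤ N) (hδ : 0 < δ) (hδ' : δ ≤ 1 / 2)
    (hθ : θ ∈ Icc 0 π) (β : ℝ) : regularizedSin N θ ^ β ≤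
      (1 / δ) ^ |β| * sin ((1 - δ / N) * θ + δ / N * (π / 2)) ^ β := by
  have hN_pos : 0 < N := by linarith
  have h_sin := sin_nonneg_of_mem_Icc hθ
  have h_weight := regularizedSin_pos hN_pos h_sin
  have h_step : δ / N ≤ δ := div_le_self hδ.le hN
  have h_step_pos : 0 < δ / N := by positivity
  set σ := (1 - δ / N) * θ + δ / N * (π / 2)
  have h_lower : δ * regularizedSin N θ ≤ sin σ :=
    calc δ * regularizedSin N θ = δ * sin θ + δ / N := by unfold regularizedSin; ring
      _ ≤ (1 - δ / N) * sin θ + δ / N * sin (π / 2) := by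
          rw [sin_pi_div_two, mul_one]
          gcongr
          linarith
      _ ≤ sin σ := strictConcaveOn_sin_Icc.concaveOn.2 hθ ⟨by positivity, by linarith [pi_pos]⟩
          (by linarith) h_step_pos.le (by ring)
  have h_upper : sin σ ≤ regularizedSin N θ := by
    have h_dist : |σ - θ| ≤ 1 / N := by
      rw [show σ - θ = δ * (π / 2 - θ) / N by simp only [σ]; ring, abs_div, abs_of_pos hN_pos]
      gcongr
      rw [abs_le]
      constructor <;> nlinarith [hθ.1, hθ.2, pi_le_four, pi_pos]
    have h_lipschitz := (abs_le.1 (abs_sin_sub_sin_le σ θ)).2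
    unfold regularizedSin
    linarith
  refine rpow_le_rpow_abs_mul_rpow h_weight ((by positivity : 0 < δ * _).trans_le h_lower)
    ?_ (h_upper.trans (le_mul_of_one_le_left h_weight.le (by rw [le_div_iff₀ hδ]; linarith))) β
  rwa [div_mul_eq_mul_div, one_mul, le_div_iff₀' hδ]

lemma le_two_mul_of_le_add_half {x y : ℝ≥0∞} (hx : x ≠ ⊤) (h : x ≤ y + x / 2) : x ≤ 2 * y := by
  rw [mul_comm, ← ENNReal.div_le_iff two_ne_zero ENNReal.ofNat_ne_top]
  refine ENNReal.le_of_add_le_add_right (ENNReal.div_ne_top hx two_ne_zero) ?_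
  rwa [ENNReal.add_halves]

lemma eLpNorm_comp_contraction_le {E : Type*} [NormedAddCommGroup E] {ε : ℝ} (hε : 0 ≤ ε)
    (hε' : ε ≤ 1 / 2) {p : ℝ≥0∞} (hp : 1 ≤ p) (f : ℝ → E) :
    eLpNorm (fun θ => f ((1 - ε) * θ + ε * (π / 2))) p angleMeasure ≤
      2 * eLpNorm f p angleMeasure := by
  have h_maps : MapsTo (fun θ => (1 - ε) * θ + ε * (π / 2)) (Ioo 0 π) (Ioo 0 π) := fun θ hθ => by
    constructor <;> nlinarith [hθ.1, hθ.2, pi_pos]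
  refine (eLpNorm_comp_affine_le (by linarith) h_maps p f).trans (mul_le_mul' ?_ le_rfl)
  have h_inv : (1 - ε)⁻¹ ≤ 2 := by
    rw [inv_le_comm₀ (by linarith) two_pos]; linarith
  have h_exponent : (1 / p).toReal ≤ 1 :=
    ENNReal.toReal_le_of_le_ofReal zero_le_one (by simpa using hp)
  calc ENNReal.ofReal |(1 - ε)⁻¹| ^ (1 / p).toReal ≤ 2 ^ (1 / p).toReal := by
        rw [abs_of_nonneg (inv_nonneg.2 (by linarith))]
        exact ENNReal.rpow_le_rpow (by simpa using ENNReal.ofReal_le_ofReal h_inv)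
          ENNReal.toReal_nonneg
    _ ≤ 2 ^ (1 : ℝ) := ENNReal.rpow_le_rpow_of_exponent_le one_le_two h_exponent
    _ = 2 := ENNReal.rpow_one _

lemma IsSlowlyVarying.mul_regularizedSin_rpow_le {N A δ : ℝ} {k : ℕ} {h : ℝ → ℝ}
    (h_slow : IsSlowlyVarying N k A h) (hN : 1 ≤ N) (hA : 0 ≤ A) (h_nonneg : ∀ s, 0 ≤ h s)
    (hδ : 0 < δ) (hδ' : δ ≤ 1 / 16) {θ : ℝ} (hθ : θ ∈ Icc 0 π) (β : ℝ) :
    h θ * regularizedSin N θ ^ β ≤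
      (1 / δ) ^ |β| * (h ((1 - δ / N) * θ + δ / N * (π / 2)) *
        sin ((1 - δ / N) * θ + δ / N * (π / 2)) ^ β) +
      2 * A * δ * (localAverage N k h θ * regularizedSin N θ ^ β) := by
  have hN_pos : 0 < N := by linarith
  set σ := (1 - δ / N) * θ + δ / N * (π / 2)
  have h_dist : N * |θ - σ| ≤ 2 * δ := by
    rw [show θ - σ = δ / N * (θ - π / 2) by simp only [σ]; ring, abs_mul,
      abs_of_pos (by positivity), ← mul_assoc, mul_div_cancel₀ _ hN_pos.ne', mul_comm]
    refine mul_le_mul_of_nonneg_right (abs_le.2 ⟨?_, ?_⟩) hδ.le <;>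
      linarith [hθ.1, hθ.2, pi_le_four]
  have h_average := localAverage_nonneg hN_pos.le k h_nonneg θ
  have h_le : h θ ≤ h σ + 2 * A * δ * localAverage N k h θ :=
    calc h θ ≤ h σ + A * (N * |θ - σ|) * localAverage N k h θ := h_slow θ hθ σ (by linarith)
      _ ≤ h σ + A * (2 * δ) * localAverage N k h θ := by gcongr
      _ = h σ + 2 * A * δ * localAverage N k h θ := by ring
  have h_weight :=
    rpow_nonneg (regularizedSin_pos hN_pos (sin_nonneg_of_mem_Icc hθ)).le β
  calc h θ * regularizedSin N θ ^ β
      ≤ (h σ + 2 * A * δ * localAverage N k h θ) * regularizedSin N θ ^ β := by gcongr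
    _ = h σ * regularizedSin N θ ^ β +
          2 * A * δ * (localAverage N k h θ * regularizedSin N θ ^ β) := by ring
    _ ≤ h σ * ((1 / δ) ^ |β| * sin σ ^ β) +
          2 * A * δ * (localAverage N k h θ * regularizedSin N θ ^ β) := by
        gcongr
        · exact h_nonneg σ
        · exact regularizedSin_rpow_le_sin_rpow hN hδ (by linarith) hθ β
    _ = _ := by ring

lemma IsSlowlyVarying.eLpNorm_mul_regularizedSin_rpow_le {N A δ β : ℝ} {g : ℕ} {h : ℝ → ℝ}
    (h_slow : IsSlowlyVarying N (g + 2) A h) (hN : 1 ≤ N) (hA : 0 ≤ A) (hg : |β| ≤ g)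
    (h_cont : Continuous h) (h_nonneg : ∀ s, 0 ≤ h s) (hδ : 0 < δ) (hδ' : δ ≤ 1 / 16)
    {p : ℝ≥0∞} (hp : 1 ≤ p) :
    eLpNorm (fun θ => h θ * regularizedSin N θ ^ β) p angleMeasure ≤
      ENNReal.ofReal ((1 / δ) ^ |β|) *
        (2 * eLpNorm (fun θ => h θ * sin θ ^ β) p angleMeasure) +
      ENNReal.ofReal (2 * A * δ * π) *
        eLpNorm (fun θ => h θ * regularizedSin N θ ^ β) p angleMeasure := by
  have hN_pos : 0 < N := by linarith
  set u : ℝ → ℝ := fun θ => h ((1 - δ / N) * θ + δ / N * (π / 2)) *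
    sin ((1 - δ / N) * θ + δ / N * (π / 2)) ^ β
  set v : ℝ → ℝ := fun θ => localAverage N (g + 2) h θ * regularizedSin N θ ^ β
  have hu : Measurable u := by have := h_cont.measurable; fun_prop
  have hv : Measurable v := (continuous_localAverage hN_pos.le _ h_cont).measurable.mul
    ((continuous_regularizedSin N).measurable.pow_const β)
  have h_pointwise : ∀ᵐ θ ∂angleMeasure, ‖h θ * regularizedSin N θ ^ β‖ ≤
      (((1 / δ) ^ |β|) • u + (2 * A * δ) • v) θ :=
    (ae_restrict_mem measurableSet_Ioo).mono fun θ hθ => by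
      have hθ' := Ioo_subset_Icc_self hθ
      rw [Real.norm_of_nonneg (mul_nonneg (h_nonneg θ)
        (rpow_nonneg (regularizedSin_pos hN_pos (sin_nonneg_of_mem_Icc hθ')).le β))]
      exact h_slow.mul_regularizedSin_rpow_le hN hA h_nonneg hδ hδ' hθ' β
  calc _ ≤ eLpNorm (((1 / δ) ^ |β|) • u + (2 * A * δ) • v) p angleMeasure :=
        eLpNorm_mono_ae_real h_pointwise
    _ ≤ eLpNorm (((1 / δ) ^ |β|) • u) p angleMeasure +
          eLpNorm ((2 * A * δ) • v) p angleMeasure :=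
        eLpNorm_add_le (hu.const_smul _).aestronglyMeasurable
          (hv.const_smul _).aestronglyMeasurable hp
    _ ≤ _ := by
        rw [eLpNorm_const_smul, eLpNorm_const_smul, Real.enorm_of_nonneg (by positivity),
          Real.enorm_of_nonneg (by positivity), ENNReal.ofReal_mul (p := 2 * A * δ) (by positivity),
          mul_assoc (ENNReal.ofReal (2 * A * δ))]
        exact add_le_add
          (mul_le_mul' le_rfl (eLpNorm_comp_contraction_le (f := fun θ => h θ * sin θ ^ β)
            (by positivity) ((div_le_self hδ.le hN).trans (by linarith)) hp))
          (mul_le_mul' le_rfl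
            (eLpNorm_localAverage_mul_regularizedSin_rpow_le hN_pos hg h_cont h_nonneg hp))

lemma exists_eLpNorm_mul_regularizedSin_rpow_le {p : ℝ≥0∞} (hp : 1 ≤ p) {β : ℝ} {g : ℕ}
    (hg : |β| ≤ g) {A : ℝ} (hA : 0 ≤ A) :
    ∃ C : NNReal, ∀ N ≥ 1, ∀ h : ℝ → ℝ, Continuous h → (∀ s, 0 ≤ h s) →
      IsSlowlyVarying N (g + 2) A h →
      eLpNorm (fun θ => h θ * regularizedSin N θ ^ β) p angleMeasure ≤
        C * eLpNorm (fun θ => h θ * sin θ ^ β) p angleMeasure := by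
  set δ := 1 / (16 * (1 + A)) with hδ_def
  have hδ : 0 < δ := by positivity
  have hδ' : δ ≤ 1 / 16 := one_div_le_one_div_of_le (by norm_num) (by linarith)
  have h_small : 2 * A * δ * π ≤ 2⁻¹ := by
    have : 2 * A * δ ≤ 1 / 8 := by
      rw [hδ_def, mul_one_div, div_le_div_iff₀ (by positivity) (by norm_num)]; linarith
    nlinarith [pi_le_four, pi_pos]
  refine ⟨2 * (((1 / δ) ^ |β|).toNNReal * 2), fun N hN h h_cont h_nonneg h_slow => ?_⟩
  have h_half : ENNReal.ofReal (2 * A * δ * π) ≤ 2⁻¹ :=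
    (ENNReal.ofReal_le_ofReal h_small).trans_eq (by rw [ENNReal.ofReal_inv_of_pos two_pos]; simp)
  refine (le_two_mul_of_le_add_half
    (eLpNorm_mul_regularizedSin_rpow_lt_top (by linarith) β h_cont p).ne
    ((h_slow.eLpNorm_mul_regularizedSin_rpow_le hN hA hg h_cont h_nonneg hδ hδ' hp).trans
      (add_le_add_right ?_ _))).trans_eq ?_
  · rw [ENNReal.div_eq_inv_mul]
    exact mul_le_mul' h_half le_rfl
  · push_cast
    rw [← mul_assoc, ← mul_assoc, ← mul_assoc]
    rfl

lemma exists_eLpNorm_localAverage_mul_sin_rpow_le_of_isSlowlyVarying {p : ℝ≥0∞} (hp : 1 ≤ p)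
    {β : ℝ} (hβ : -1 < β * p.toReal) (hβ_top : p = ⊤ → 0 ≤ β) {g : ℕ} (hg : |β| ≤ g) {A : ℝ}
    (hA : 0 ≤ A) :
    ∃ C > 0, ∀ N ≥ 1, ∀ h : ℝ → ℝ, Continuous h → (∀ s, 0 ≤ h s) →
      IsSlowlyVarying N (g + 2) A h →
      eLpNorm (fun θ => localAverage N (g + 2) h θ * sin θ ^ β) p angleMeasure ≤
        ENNReal.ofReal C * eLpNorm (fun θ => h θ * sin θ ^ β) p angleMeasure := by
  obtain ⟨B, hB⟩ := exists_eLpNorm_localAverage_mul_sin_rpow_le hp hβ hβ_top hg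
  obtain ⟨D, hD⟩ := exists_eLpNorm_mul_regularizedSin_rpow_le hp hg hA
  refine ⟨B * D + 1, by positivity, fun N hN h h_cont h_nonneg h_slow => ?_⟩
  have h_const : (B : ℝ≥0∞) * D ≤ ENNReal.ofReal (B * D + 1) := by
    rw [← ENNReal.coe_mul, ← ENNReal.ofReal_coe_nnreal, NNReal.coe_mul]
    exact ENNReal.ofReal_le_ofReal (by linarith)
  calc _ ≤ B * (D * eLpNorm (fun θ => h θ * sin θ ^ β) p angleMeasure) :=
        (hB N (by linarith) h h_cont h_nonneg).trans
          (mul_le_mul' le_rfl (hD N hN h h_cont h_nonneg h_slow))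
    _ ≤ _ := by
        rw [← mul_assoc]
        exact mul_le_mul' h_const le_rfl

lemma neg_one_lt_two_mul_add_inv_mul_toReal {p : ℝ≥0∞} (hp : p ≠ 0) {α : ℝ}
    (hα : p ≠ ⊤ → -(1 / p.toReal) < α) : -1 < (2 * α + 1 / p.toReal) * p.toReal := by
  rcases eq_or_ne p ⊤ with rfl | hp_top
  · simp
  have hr_pos := ENNReal.toReal_pos hp hp_top
  have hα_mul := (div_lt_iff₀ hr_pos).1 ((neg_div _ _).trans_lt (hα hp_top))
  rw [add_mul, one_div_mul_cancel hr_pos.ne']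
  linarith

lemma wnorm_le_of_abs_comp_cos_le {p : ℝ≥0∞} (hp : p ≠ 0) (α : ℝ) {f G : ℝ → ℝ} {M : ℝ}
    (hf : Measurable f) (hM : 0 ≤ M) (h_le : ∀ θ ∈ Ioo 0 π, |f (cos θ)| ≤ M * G θ) :
    wnorm p α f ≤ ENNReal.ofReal M *
      eLpNorm (fun θ => G θ * sin θ ^ (2 * α + 1 / p.toReal)) p angleMeasure := by
  rw [wnorm_eq_eLpNorm_comp_cos hp α hf, ← Real.enorm_of_nonneg hM, ← eLpNorm_const_smul]
  refine eLpNorm_mono_ae_real ((ae_restrict_mem measurableSet_Ioo).mono fun θ hθ => ?_)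
  have h_weight := rpow_nonneg (sin_pos_of_mem_Ioo hθ).le (2 * α + 1 / p.toReal)
  rw [norm_mul, Real.norm_of_nonneg h_weight, Pi.smul_apply, smul_eq_mul, ← mul_assoc]
  exact mul_le_mul_of_nonneg_right (h_le θ hθ) h_weight

lemma wnorm_eval_eq_eLpNorm_absEvalCos {p : ℝ≥0∞} (hp : p ≠ 0) (α : ℝ) (q : ℝ[X]) :
    wnorm p α (fun x => q.eval x) =
      eLpNorm (fun θ => absEvalCos q θ * sin θ ^ (2 * α + 1 / p.toReal)) p angleMeasure := by
  rw [wnorm_eq_eLpNorm_comp_cos hp α q.continuous.measurable]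
  refine eLpNorm_congr_norm_ae (ae_of_all _ fun θ => ?_)
  rw [absEvalCos, norm_mul, norm_mul, Real.norm_eq_abs |_|, abs_abs, Real.norm_eq_abs]

lemma measurable_Dop (f : ℝ → ℝ) : Measurable (Dop f) :=
  (Measurable.mul (by fun_prop) (measurable_deriv _)).sub
    (Measurable.mul (by fun_prop) (measurable_deriv _))

end WeightedBernstein

open WeightedBernstein

theorem D_polynomial_bound (p : ℝ≥0∞) (α : ℝ) (hp : 1 ≤ p)
    (hα : (p ≠ ⊤ → -(1 / p.toReal) < α) ∧ (p = ⊤ → 0 ≤ α)) :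
    ∃ C > (0 : ℝ), ∀ n : ℕ, 1 ≤ n → ∀ q : Polynomial ℝ, q.natDegree ≤ n - 1 →
      wnorm p α (Dop fun x => q.eval x) ≤
        ENNReal.ofReal (C * (n : ℝ) ^ 2) * wnorm p α (fun x => q.eval x) := by
  have hp_ne : p ≠ 0 := (zero_lt_one.trans_le hp).ne'
  set β := 2 * α + 1 / p.toReal with hβ_def
  have hβ : -1 < β * p.toReal := neg_one_lt_two_mul_add_inv_mul_toReal hp_ne hα.1
  have hβ_top : p = ⊤ → 0 ≤ β := fun h => by simpa [hβ_def, h] using hα.2 h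
  obtain ⟨g, hg⟩ := exists_nat_ge |β|
  obtain ⟨A, hA, h_poly⟩ := exists_abs_Dop_le_and_isSlowlyVarying (g + 2)
  obtain ⟨B, hB, h_average⟩ :=
    exists_eLpNorm_localAverage_mul_sin_rpow_le_of_isSlowlyVarying hp hβ hβ_top hg hA.le
  refine ⟨A * B, by positivity, fun n hn q hq => ?_⟩
  obtain ⟨h_Dop, h_slow⟩ := h_poly n q hn (hq.trans (n.sub_le 1))
  calc _ ≤ ENNReal.ofReal (A * n ^ 2) * eLpNorm
          (fun θ => localAverage n (g + 2) (absEvalCos q) θ * sin θ ^ β) p angleMeasure :=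
        wnorm_le_of_abs_comp_cos_le hp_ne α (measurable_Dop _) (by positivity) h_Dop
    _ ≤ ENNReal.ofReal (A * n ^ 2) * (ENNReal.ofReal B * wnorm p α fun x => q.eval x) := by
        rw [wnorm_eval_eq_eLpNorm_absEvalCos hp_ne]
        exact mul_le_mul' le_rfl (h_average n (by exact_mod_cast hn) _ (continuous_absEvalCos q)
          (fun _ => abs_nonneg _) h_slow)
    _ = _ := by rw [← mul_assoc, ← ENNReal.ofReal_mul (by positivity), mul_right_comm A]
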